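/- arXiv:1304.0562 — 7 statements merged into one kernel-verified Lean document; each statement's English description precedes it below -/
import Mathlib

section
/- The function θ is smooth on ℝ × (0,∞) and solves the heat equation there: for all x ∈ ℝ and t > 0, ∂θ/∂t (x,t) = (1/2)·∂²θ/∂x² (x,t). -/
open Real MeasureTheory Set Filter

/-- The Jacobi-theta-type function `θ(x,t) = 1/2 + ∑_{n≥1} exp(−π²n²t/2)·cos(πnx)`. -/
noncomputable def thetaFn (x t : ℝ) : ℝ :=
  1/2 + ∑' n : ℕ, Real.exp (-(π^2) * ((n : ℝ) + 1)^2 * t / 2) * Real.cos (π * ((n : ℝ) + 1) * x)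

/-!
Differentiating `∑ exp (-ω² t / 2) cos (ω x + φ) • c` term by term in `x` multiplies the amplitudes
`c` by the frequencies `ω` and shifts the phases `φ` by `π / 2`; differentiating in `t` multiplies
the amplitudes by `-ω² / 2`. The Gaussian factor absorbs every power of `ω`, so the new series
converge as well as the old one and a single computation of the total derivative bootstraps to
smoothness. Two phase shifts by `π / 2` amount to a sign, which is the heat equation. Up to the
constant `1 / 2`, `θ` is the series with `ω = π (n + 1)`, `φ = 0` and `c = 1`.
-/

section HeatSeries

variable {ι E : Type*} [NormedAddCommGroup E]

/-- The condition on frequencies and amplitudes under which a heat series converges absolutely at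
all positive times, whatever its phases. -/
def HeatSummable (ω : ι → ℝ) (c : ι → E) : Prop :=
  ∀ ⦃t : ℝ⦄, 0 < t → Summable fun i => exp (-(ω i ^ 2 * t / 2)) * ‖c i‖

lemma heatSummable_of_mul_le_sq {ω : ℕ → ℝ} {c : ℕ → E} {a C : ℝ} (ha : 0 < a)
    (hω : ∀ n : ℕ, a * n ≤ ω n ^ 2) (hc : ∀ n, ‖c n‖ ≤ C) : HeatSummable ω c := by
  intro t ht
  have h_geom : Summable fun n : ℕ => exp (n * -(a * t / 2)) * C :=
    (summable_exp_nat_mul_iff.2 (neg_neg_of_pos (by positivity))).mul_right C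
  refine h_geom.of_nonneg_of_le (fun n => by positivity) fun n => ?_
  have h_exponent : -(ω n ^ 2 * t / 2) ≤ n * -(a * t / 2) := by
    linarith [mul_le_mul_of_nonneg_right (hω n) ht.le]
  gcongr
  exact hc n

variable [NormedSpace ℝ E]

/-- The elementary solution `exp (-ω² t / 2) cos (ω x + φ)` of the heat equation
`∂ₜ u = (1/2) ∂ₓ² u`, at the point `p = (x, t)`. The phase `φ` makes the family of these modes
stable under differentiation. -/
noncomputable def heatMode (ω φ : ℝ) (p : ℝ × ℝ) : ℝ :=
  exp (-(ω ^ 2 * p.2 / 2)) * cos (ω * p.1 + φ)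

/-- The superposition of heat modes with frequencies `ω i`, phases `φ i` and amplitudes `c i`, at
the point `p = (x, t)`; the sum is `0` by convention where it does not converge. -/
noncomputable def heatSeries (ω φ : ι → ℝ) (c : ι → E) (p : ℝ × ℝ) : E :=
  ∑' i, heatMode (ω i) (φ i) p • c i

lemma heatMode_add_pi (ω φ : ℝ) (p : ℝ × ℝ) : heatMode ω (φ + π) p = -heatMode ω φ p := by
  rw [heatMode, heatMode, ← add_assoc, cos_add_pi, mul_neg]

lemma heatSeries_add_pi (ω φ : ι → ℝ) (c : ι → E) (p : ℝ × ℝ) :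
    heatSeries ω (fun i => φ i + π) c p = -heatSeries ω φ c p := by
  simp only [heatSeries, heatMode_add_pi, neg_smul, tsum_neg]

lemma norm_heatMode_smul_le (ω φ : ℝ) (c : E) {t : ℝ} {p : ℝ × ℝ} (hp : t ≤ p.2) :
    ‖heatMode ω φ p • c‖ ≤ exp (-(ω ^ 2 * t / 2)) * ‖c‖ := by
  have hcos : |cos (ω * p.1 + φ)| ≤ 1 := abs_cos_le_one _
  rw [norm_smul, heatMode, norm_mul, norm_eq_abs, norm_eq_abs, abs_exp]
  calc exp (-(ω ^ 2 * p.2 / 2)) * |cos (ω * p.1 + φ)| * ‖c‖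
      ≤ exp (-(ω ^ 2 * t / 2)) * 1 * ‖c‖ := by gcongr
    _ = exp (-(ω ^ 2 * t / 2)) * ‖c‖ := by rw [mul_one]

lemma hasFDerivAt_heatMode_smul (ω φ : ℝ) (c : E) (p : ℝ × ℝ) :
    HasFDerivAt (fun q => heatMode ω φ q • c)
      ((ContinuousLinearMap.fst ℝ ℝ ℝ).smulRight (heatMode ω (φ + π / 2) p • ω • c) +
        (ContinuousLinearMap.snd ℝ ℝ ℝ).smulRight
          (-(1 / 2 : ℝ) • heatMode ω φ p • ω • ω • c)) p := by
  have h_cos : HasFDerivAt (fun q : ℝ × ℝ => cos (ω * q.1 + φ)) _ p :=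
    ((hasFDerivAt_fst.const_mul ω).add_const φ).cos
  have h_exp : HasFDerivAt (fun q : ℝ × ℝ => exp (-(ω ^ 2 * q.2 / 2))) _ p :=
    ((hasFDerivAt_snd.const_mul (ω ^ 2)).mul_const (2⁻¹ : ℝ)).neg.exp
  refine ((h_exp.mul h_cos).smul_const c).congr_fderiv ?_
  ext <;> simp [heatMode, ← add_assoc, cos_add_pi_div_two, smul_smul] <;> ring_nf

lemma norm_smulRight_fst_add_smulRight_snd_le (a b : E) :
    ‖(ContinuousLinearMap.fst ℝ ℝ ℝ).smulRight a + (ContinuousLinearMap.snd ℝ ℝ ℝ).smulRight b‖ ≤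
      ‖a‖ + ‖b‖ := by
  refine (norm_add_le _ _).trans ?_
  rw [ContinuousLinearMap.norm_smulRight_apply, ContinuousLinearMap.norm_smulRight_apply]
  gcongr
  · exact mul_le_of_le_one_left (norm_nonneg a) (ContinuousLinearMap.norm_fst_le ..)
  · exact mul_le_of_le_one_left (norm_nonneg b) (ContinuousLinearMap.norm_snd_le ..)

/-- Half of the Gaussian decay absorbs the factor `|ω|`: by AM-GM `|ω| √t ≤ 1 + ω² t / 4`, which
is at most `exp (ω² t / 4)`. -/
lemma abs_mul_exp_neg_sq_le (ω : ℝ) {t : ℝ} (ht : 0 < t) :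
    |ω| * exp (-(ω ^ 2 * t / 2)) ≤ (√t)⁻¹ * exp (-(ω ^ 2 * (t / 2) / 2)) := by
  have h_amgm : |ω| * √t ≤ exp (ω ^ 2 * t / 4) :=
    calc |ω| * √t ≤ ω ^ 2 * t / 4 + 1 := by
          nlinarith [sq_nonneg (|ω| * √t / 2 - 1), sq_abs ω, sq_sqrt ht.le]
      _ ≤ exp (ω ^ 2 * t / 4) := add_one_le_exp _
  calc |ω| * exp (-(ω ^ 2 * t / 2))
      ≤ (√t)⁻¹ * exp (ω ^ 2 * t / 4) * exp (-(ω ^ 2 * t / 2)) := by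
        gcongr
        rwa [inv_mul_eq_div, le_div_iff₀ (sqrt_pos.2 ht)]
    _ = (√t)⁻¹ * exp (-(ω ^ 2 * (t / 2) / 2)) := by
        rw [mul_assoc, ← exp_add]
        ring_nf

namespace HeatSummable

variable {ω : ι → ℝ} {c : ι → E}

lemma smul_freq (h : HeatSummable ω c) : HeatSummable ω (ω • c) := by
  intro t ht
  refine ((h (half_pos ht)).mul_left (√t)⁻¹).of_nonneg_of_le (fun i => by positivity) fun i => ?_
  calc exp (-(ω i ^ 2 * t / 2)) * ‖(ω • c) i‖
      = |ω i| * exp (-(ω i ^ 2 * t / 2)) * ‖c i‖ := by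
        rw [Pi.smul_apply', norm_smul, norm_eq_abs]
        ring
    _ ≤ (√t)⁻¹ * exp (-(ω i ^ 2 * (t / 2) / 2)) * ‖c i‖ := by
        gcongr ?_ * _
        exact abs_mul_exp_neg_sq_le (ω i) ht
    _ = (√t)⁻¹ * (exp (-(ω i ^ 2 * (t / 2) / 2)) * ‖c i‖) := mul_assoc _ _ _

variable [CompleteSpace E]

lemma hasSum_heatSeries (h : HeatSummable ω c) (φ : ι → ℝ) {p : ℝ × ℝ} (hp : 0 < p.2) :
    HasSum (fun i => heatMode (ω i) (φ i) p • c i) (heatSeries ω φ c p) :=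
  ((h hp).of_norm_bounded fun i => norm_heatMode_smul_le (ω i) (φ i) (c i) le_rfl).hasSum

lemma hasFDerivAt_heatSeries (h : HeatSummable ω c) (φ : ι → ℝ) {p : ℝ × ℝ} (hp : 0 < p.2) :
    HasFDerivAt (heatSeries ω φ c)
      ((ContinuousLinearMap.fst ℝ ℝ ℝ).smulRight
          (heatSeries ω (fun i => φ i + π / 2) (ω • c) p) +
        (ContinuousLinearMap.snd ℝ ℝ ℝ).smulRight
          (-(1 / 2 : ℝ) • heatSeries ω φ (ω • ω • c) p)) p := by
  let s : Set (ℝ × ℝ) := {q | p.2 / 2 < q.2}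
  have hs_open : IsOpen s := isOpen_lt continuous_const continuous_snd
  have hs_conv : Convex ℝ s :=
    convex_halfSpace_gt (ContinuousLinearMap.snd ℝ ℝ ℝ).isLinear _
  have hps : p ∈ s := half_lt_self hp
  have h_bound := (h.smul_freq (half_pos hp)).add (h.smul_freq.smul_freq (half_pos hp))
  refine (hasFDerivAt_tsum_of_isPreconnected h_bound hs_open hs_conv.isPreconnected
    (fun i q _ => hasFDerivAt_heatMode_smul (ω i) (φ i) (c i) q) (fun i q hq => ?_) hps
    (h.hasSum_heatSeries φ hp).summable hps).congr_fderiv (HasSum.tsum_eq ?_)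
  · have hq' : p.2 / 2 ≤ q.2 := le_of_lt hq
    refine (norm_smulRight_fst_add_smulRight_snd_le _ _).trans ?_
    gcongr
    · exact norm_heatMode_smul_le _ _ _ hq'
    · rw [norm_smul]
      refine (mul_le_of_le_one_left (norm_nonneg _) (by norm_num)).trans ?_
      exact norm_heatMode_smul_le _ _ _ hq'
  · have h_fst := h.smul_freq.hasSum_heatSeries (fun i => φ i + π / 2) hp
    have h_snd := (h.smul_freq.smul_freq.hasSum_heatSeries φ hp).const_smul (-(1 / 2 : ℝ))
    exact (h_fst.mapL (ContinuousLinearMap.smulRightL ℝ (ℝ × ℝ) E (.fst ℝ ℝ ℝ))).add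
      (h_snd.mapL (ContinuousLinearMap.smulRightL ℝ (ℝ × ℝ) E (.snd ℝ ℝ ℝ)))

lemma contDiffOn_heatSeries (h : HeatSummable ω c) (φ : ι → ℝ) :
    ContDiffOn ℝ (⊤ : ℕ∞) (heatSeries ω φ c) (univ ×ˢ Ioi 0) := by
  refine contDiffOn_infty.2 fun m => ?_
  induction m generalizing φ c with
  | zero =>
    exact contDiffOn_zero.2 fun p hp =>
      (h.hasFDerivAt_heatSeries φ hp.2).continuousAt.continuousWithinAt
  | succ m ih =>
    rw [Nat.cast_succ, contDiffOn_succ_iff_fderiv_of_isOpen (isOpen_univ.prod isOpen_Ioi)]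
    refine ⟨fun p hp => (h.hasFDerivAt_heatSeries φ hp.2).differentiableAt.differentiableWithinAt,
      by simp, ContDiffOn.congr ?_ fun p hp => (h.hasFDerivAt_heatSeries φ hp.2).fderiv⟩
    exact (contDiffOn_const.smulRight (ih h.smul_freq _)).add
      (contDiffOn_const.smulRight ((ih h.smul_freq.smul_freq φ).const_smul _))

lemma hasDerivAt_heatSeries_fst (h : HeatSummable ω c) (φ : ι → ℝ) (x : ℝ) {t : ℝ} (ht : 0 < t) :
    HasDerivAt (fun y => heatSeries ω φ c (y, t))
      (heatSeries ω (fun i => φ i + π / 2) (ω • c) (x, t)) x := by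
  have h_comp := (h.hasFDerivAt_heatSeries φ (p := (x, t)) ht).comp_hasDerivAt x
    ((hasDerivAt_id x).prodMk (hasDerivAt_const x t))
  simpa [Function.comp_def] using h_comp

lemma hasDerivAt_heatSeries_snd (h : HeatSummable ω c) (φ : ι → ℝ) (x : ℝ) {t : ℝ} (ht : 0 < t) :
    HasDerivAt (fun s => heatSeries ω φ c (x, s))
      (-(1 / 2 : ℝ) • heatSeries ω φ (ω • ω • c) (x, t)) t := by
  have h_comp := (h.hasFDerivAt_heatSeries φ (p := (x, t)) ht).comp_hasDerivAt t
    ((hasDerivAt_const t x).prodMk (hasDerivAt_id t))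
  simpa [Function.comp_def] using h_comp

lemma iteratedDeriv_two_heatSeries_fst (h : HeatSummable ω c) (φ : ι → ℝ) (x : ℝ) {t : ℝ}
    (ht : 0 < t) :
    iteratedDeriv 2 (fun y => heatSeries ω φ c (y, t)) x =
      -heatSeries ω φ (ω • ω • c) (x, t) := by
  have h_deriv : deriv (fun y => heatSeries ω φ c (y, t)) =
      fun y => heatSeries ω (fun i => φ i + π / 2) (ω • c) (y, t) :=
    funext fun y => (h.hasDerivAt_heatSeries_fst φ y ht).deriv
  rw [iteratedDeriv_succ, iteratedDeriv_one, h_deriv,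
    (h.smul_freq.hasDerivAt_heatSeries_fst _ x ht).deriv]
  simp only [add_assoc, add_halves, heatSeries_add_pi]

theorem deriv_heatSeries_snd_eq (h : HeatSummable ω c) (φ : ι → ℝ) (x : ℝ) {t : ℝ} (ht : 0 < t) :
    deriv (fun s => heatSeries ω φ c (x, s)) t =
      (1 / 2 : ℝ) • iteratedDeriv 2 (fun y => heatSeries ω φ c (y, t)) x := by
  rw [(h.hasDerivAt_heatSeries_snd φ x ht).deriv, h.iteratedDeriv_two_heatSeries_fst φ x ht,
    neg_smul, smul_neg]

end HeatSummable

end HeatSeries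

lemma thetaFn_eq_half_add_heatSeries (x t : ℝ) :
    thetaFn x t =
      1 / 2 + heatSeries (fun n : ℕ => π * (n + 1)) (fun _ => 0) (fun _ => (1 : ℝ)) (x, t) := by
  simp only [thetaFn, heatSeries, heatMode, mul_pow, neg_mul, neg_div, add_zero, smul_eq_mul,
    mul_one]

lemma heatSummable_thetaFn : HeatSummable (fun n : ℕ => π * (n + 1)) (fun _ => (1 : ℝ)) := by
  refine heatSummable_of_mul_le_sq (a := π ^ 2) (by positivity) (fun n => ?_) fun _ => norm_one.le
  rw [mul_pow]
  gcongr
  nlinarith [n.cast_nonneg (α := ℝ)]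

/-- θ is smooth on ℝ × (0,∞) and solves the heat equation
`∂θ/∂t = (1/2)·∂²θ/∂x²` there. -/
theorem stmt1 :
    ContDiffOn ℝ (⊤ : ℕ∞) (fun p : ℝ × ℝ => thetaFn p.1 p.2) (Set.univ ×ˢ Set.Ioi (0:ℝ)) ∧
    ∀ x t : ℝ, 0 < t →
      deriv (fun s => thetaFn x s) t = (1/2) * iteratedDeriv 2 (fun y => thetaFn y t) x := by
  simp only [thetaFn_eq_half_add_heatSeries]
  refine ⟨contDiffOn_const.add (heatSummable_thetaFn.contDiffOn_heatSeries _), fun x t ht => ?_⟩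
  rw [deriv_const_add, iteratedDeriv_const_add two_pos]
  exact heatSummable_thetaFn.deriv_heatSeries_snd_eq _ x ht
end

section
/- For every t > 0, the function x ↦ θ(x,t) is strictly decreasing on the interval [0,1]. -/
open Real MeasureTheory Set Filter

/-!
By Jacobi's triple product, with `q = exp (-π² t / 2)`,
`2 θ(x, t) = ∏ₖ (1 - q ^ (2k+2)) * ∏ₖ (1 + 2 q ^ (2k+1) cos (π x) + q ^ (4k+2))`.
Every factor is positive, and each factor of the second product is strictly increasing in
`cos (π x)`, which strictly decreases on `[0, 1]`.

The triple product is the limit `m = n → ∞` of a finite identity for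
`∏_{k<m} (1 + q ^ (2k+1) z) * ∏_{k<n} (1 + q ^ (2k+1) z⁻¹)`. Letting `m` and `n` vary independently
makes each induction step multiply by a single factor, so that it reduces to Pascal's rule for
Gaussian binomial coefficients.
-/

open scoped Topology

section QPochhammer

variable {K : Type*} [Field K]

/-- The finite `q`-Pochhammer symbol `(a; q)_n`, in which the factors of the finite triple product
are expressed. -/
def qPochhammer (a q : K) (n : ℕ) : K := ∏ k ∈ Finset.range n, (1 - a * q ^ k)

/-- The reciprocal `1 / (q; q)_n`, used for the coefficients of the finite triple product. It is
extended by `0` to negative `n`, so that the recursion in `n` holds on all of `ℤ`. -/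
def qFactorialInv (q : K) (n : ℤ) : K := if n < 0 then 0 else (qPochhammer q q n.toNat)⁻¹

/-- The coefficient of `z ^ j` in the finite triple product with `m` factors in `z` and `n` in
`z⁻¹`, up to the factor `(q²; q²)_{m+n}`, which is independent of `j`. It vanishes unless
`-n ≤ j ≤ m`. -/
def tripleProductCoeff (q : K) (m n : ℕ) (j : ℤ) : K :=
  q ^ (j ^ 2) * (qFactorialInv (q ^ 2) (m - j) * qFactorialInv (q ^ 2) (n + j))

@[simp]
lemma qPochhammer_zero (a q : K) : qPochhammer a q 0 = 1 := Finset.prod_range_zero _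

lemma qPochhammer_succ (a q : K) (n : ℕ) :
    qPochhammer a q (n + 1) = qPochhammer a q n * (1 - a * q ^ n) :=
  Finset.prod_range_succ _ _

lemma qFactorialInv_natCast (q : K) (n : ℕ) :
    qFactorialInv q n = (qPochhammer q q n)⁻¹ := by
  simp [qFactorialInv]

lemma qFactorialInv_of_neg (q : K) {n : ℤ} (hn : n < 0) : qFactorialInv q n = 0 := if_pos hn

lemma qFactorialInv_eq_mul_add_one {q : K} (hq : ∀ k : ℕ, 1 - q * q ^ k ≠ 0) (n : ℤ) :
    qFactorialInv q n = (1 - q ^ (n + 1)) * qFactorialInv q (n + 1) := by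
  rcases lt_trichotomy n (-1) with hn | rfl | hn
  · rw [qFactorialInv_of_neg q (by lia), qFactorialInv_of_neg q (by lia), mul_zero]
  · simp [qFactorialInv_of_neg]
  · lift n to ℕ using by lia
    rw [← Nat.cast_succ, qFactorialInv_natCast, qFactorialInv_natCast, qPochhammer_succ,
      zpow_natCast, pow_succ', mul_inv, mul_comm, mul_assoc, inv_mul_cancel₀ (hq n), mul_one]

lemma tripleProductCoeff_neg (q : K) (m n : ℕ) (j : ℤ) :
    tripleProductCoeff q m n (-j) = tripleProductCoeff q n m j := by
  rw [tripleProductCoeff, neg_sq, sub_neg_eq_add, ← sub_eq_add_neg,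
    mul_comm (qFactorialInv _ _), tripleProductCoeff]

lemma tripleProductCoeff_succ_left {q : K} (hq₀ : q ≠ 0)
    (hq : ∀ k : ℕ, 1 - q ^ 2 * (q ^ 2) ^ k ≠ 0) (m n : ℕ) (j : ℤ) :
    (1 - q ^ 2 * (q ^ 2) ^ (m + n)) * tripleProductCoeff q (m + 1) n j =
      tripleProductCoeff q m n j + q * (q ^ 2) ^ m * tripleProductCoeff q m n (j - 1) := by
  have left := qFactorialInv_eq_mul_add_one hq (m - j)
  have right := qFactorialInv_eq_mul_add_one hq (n + (j - 1))
  have square : q * (q ^ 2) ^ m * q ^ ((j - 1) ^ 2) =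
      q ^ (j ^ 2) * (q ^ 2) ^ ((m : ℤ) - j + 1) := by
    simp only [← zpow_natCast, ← zpow_mul, ← zpow_add₀ hq₀, ← zpow_one_add₀ hq₀]
    congr 1
    push_cast
    ring
  have total : q ^ 2 * (q ^ 2) ^ (m + n) =
      (q ^ 2) ^ ((m : ℤ) - j + 1) * (q ^ 2) ^ ((n : ℤ) + j) := by
    simp only [← zpow_natCast, ← zpow_mul, ← zpow_add₀ hq₀]
    congr 1
    push_cast
    ring
  rw [show (n : ℤ) + (j - 1) + 1 = n + j by ring] at right
  simp only [tripleProductCoeff]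
  rw [← mul_assoc (q * _), square, total, left, right,
    show (m : ℤ) - (j - 1) = m - j + 1 by ring,
    show ((m + 1 : ℕ) : ℤ) - j = m - j + 1 by push_cast; ring]
  ring

end QPochhammer

section FiniteTripleProduct

variable {K : Type*} [Field K] [TopologicalSpace K] {q z : K}

lemma hasSum_tripleProductCoeff_swap {m n : ℕ} {s : K}
    (hs : HasSum (fun j : ℤ => tripleProductCoeff q m n j * z ^ j) s) :
    HasSum (fun j : ℤ => tripleProductCoeff q n m j * z⁻¹ ^ j) s := by
  simpa only [Function.comp_def, Equiv.neg_apply, tripleProductCoeff_neg, zpow_neg, inv_zpow]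
    using (Equiv.neg ℤ).hasSum_iff.2 hs

variable [IsTopologicalRing K]

lemma hasSum_tripleProductCoeff_succ_left (hq₀ : q ≠ 0)
    (hq : ∀ k : ℕ, 1 - q ^ 2 * (q ^ 2) ^ k ≠ 0) (hz : z ≠ 0) {m n : ℕ} {s : K}
    (hs : HasSum (fun j : ℤ => tripleProductCoeff q m n j * z ^ j) s) :
    HasSum (fun j : ℤ => tripleProductCoeff q (m + 1) n j * z ^ j)
      (s * (1 - -q * z * (q ^ 2) ^ m) / (1 - q ^ 2 * (q ^ 2) ^ (m + n))) := by
  have shifted : HasSum (fun j : ℤ => tripleProductCoeff q m n (j - 1) * z ^ (j - 1)) s := by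
    simpa only [Function.comp_def, Equiv.subRight_apply] using
      (Equiv.subRight (1 : ℤ)).hasSum_iff.2 hs
  convert (hs.add (shifted.mul_left (q * (q ^ 2) ^ m * z))).div_const
    (1 - q ^ 2 * (q ^ 2) ^ (m + n)) using 1
  · ext j
    have z_pow : z * z ^ (j - 1) = z ^ j := by rw [← zpow_one_add₀ hz, add_sub_cancel]
    rw [eq_div_iff (hq _)]
    linear_combination z ^ j * tripleProductCoeff_succ_left hq₀ hq m n j -
      q * (q ^ 2) ^ m * tripleProductCoeff q m n (j - 1) * z_pow
  · ring

theorem hasSum_finite_jacobi_triple_product (hq₀ : q ≠ 0)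
    (hq : ∀ k : ℕ, 1 - q ^ 2 * (q ^ 2) ^ k ≠ 0) (hz : z ≠ 0) (m n : ℕ) :
    HasSum (fun j : ℤ => tripleProductCoeff q m n j * z ^ j)
      (qPochhammer (-q * z) (q ^ 2) m * qPochhammer (-q * z⁻¹) (q ^ 2) n /
        qPochhammer (q ^ 2) (q ^ 2) (m + n)) := by
  induction m with
  | succ m ih =>
    convert hasSum_tripleProductCoeff_succ_left hq₀ hq hz ih using 1
    rw [Nat.add_right_comm, qPochhammer_succ, qPochhammer_succ, ← div_div]
    ring
  | zero =>
    induction n with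
    | succ n ih =>
      convert hasSum_tripleProductCoeff_swap (hasSum_tripleProductCoeff_succ_left hq₀ hq
        (inv_ne_zero hz) (hasSum_tripleProductCoeff_swap ih)) using 1
      · rw [inv_inv]
      · rw [← Nat.add_assoc, qPochhammer_succ, qPochhammer_succ, Nat.add_comm n, ← div_div]
        ring
    | zero =>
      convert hasSum_single (0 : ℤ) fun j hj => ?_ using 1
      · simp [tripleProductCoeff, qFactorialInv]
      · rcases hj.lt_or_gt with hj | hj <;>
          simp [tripleProductCoeff, qFactorialInv_of_neg, hj]

end FiniteTripleProduct

section TripleProduct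

variable {𝕜 : Type*} [NormedField 𝕜] {a q z : 𝕜}

/-- The infinite `q`-Pochhammer symbol `(a; q)_∞`, in which the product side of Jacobi's triple
product is expressed. It is meaningful for `‖q‖ < 1`. -/
noncomputable def qPochhammerInf (a q : 𝕜) : 𝕜 := ∏' k : ℕ, (1 - a * q ^ k)

lemma norm_sq_lt_one (hq : ‖q‖ < 1) : ‖q ^ 2‖ < 1 := by
  simpa only [norm_pow] using pow_lt_one₀ (norm_nonneg q) hq two_ne_zero

lemma one_sub_mul_pow_ne_zero_of_norm_lt_one (hq : ‖q‖ < 1) (k : ℕ) : 1 - q * q ^ k ≠ 0 := by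
  rw [← pow_succ', sub_ne_zero]
  intro h
  have := pow_lt_one₀ (norm_nonneg q) hq k.succ_ne_zero
  rw [← norm_pow, ← h, norm_one] at this
  exact this.false

lemma summable_norm_neg_mul_pow (a : 𝕜) (hq : ‖q‖ < 1) :
    Summable fun k : ℕ => ‖-(a * q ^ k)‖ := by
  simpa only [norm_neg, norm_mul, norm_pow] using
    (summable_geometric_of_lt_one (norm_nonneg q) hq).mul_left ‖a‖

lemma summable_norm_pow_sq_mul_pow (hq₀ : q ≠ 0) (hq : ‖q‖ < 1) (hz : z ≠ 0) :
    Summable fun n : ℕ => ‖q ^ (n ^ 2) * z ^ n‖ := by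
  refine summable_of_ratio_test_tendsto_lt_one zero_lt_one
    (.of_forall fun n => by simp [hq₀, hz]) ?_
  have ratio (n : ℕ) : ‖q ^ ((n + 1) ^ 2) * z ^ (n + 1)‖ / ‖q ^ (n ^ 2) * z ^ n‖ =
      ‖q ^ 2‖ ^ n * ‖q * z‖ := by
    rw [← norm_div, ← norm_pow, ← norm_mul]
    congr 1
    field_simp
    ring
  simpa only [norm_norm, ratio, zero_mul] using (tendsto_pow_atTop_nhds_zero_of_lt_one
    (norm_nonneg (q ^ 2)) (norm_sq_lt_one hq)).mul_const ‖q * z‖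

lemma summable_norm_zpow_sq_mul_zpow (hq₀ : q ≠ 0) (hq : ‖q‖ < 1) (hz : z ≠ 0) :
    Summable fun j : ℤ => ‖q ^ (j ^ 2) * z ^ j‖ := by
  refine .of_nat_of_neg ?_ ?_
  · exact_mod_cast summable_norm_pow_sq_mul_pow hq₀ hq hz
  · simpa only [neg_sq, zpow_neg, ← inv_zpow] using
      mod_cast summable_norm_pow_sq_mul_pow hq₀ hq (inv_ne_zero hz)

variable [CompleteSpace 𝕜]

lemma multipliable_one_sub_mul_pow (a : 𝕜) (hq : ‖q‖ < 1) :
    Multipliable fun k : ℕ => 1 - a * q ^ k := by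
  simpa only [← sub_eq_add_neg] using
    multipliable_one_add_of_summable (summable_norm_neg_mul_pow a hq)

lemma tendsto_qPochhammer (a : 𝕜) (hq : ‖q‖ < 1) :
    Tendsto (qPochhammer a q) atTop (𝓝 (qPochhammerInf a q)) :=
  (multipliable_one_sub_mul_pow a hq).tendsto_prod_tprod_nat

lemma qPochhammerInf_ne_zero (hq : ‖q‖ < 1) (h : ∀ k : ℕ, 1 - a * q ^ k ≠ 0) :
    qPochhammerInf a q ≠ 0 := by
  simp only [sub_eq_add_neg] at h
  simpa only [qPochhammerInf, sub_eq_add_neg] using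
    tprod_one_add_ne_zero_of_summable h (summable_norm_neg_mul_pow a hq)

lemma tendsto_qFactorialInv_natCast (hq : ‖q‖ < 1) :
    Tendsto (fun n : ℕ => qFactorialInv q n) atTop (𝓝 (qPochhammerInf q q)⁻¹) := by
  simpa only [qFactorialInv_natCast] using (tendsto_qPochhammer q hq).inv₀
    (qPochhammerInf_ne_zero hq (one_sub_mul_pow_ne_zero_of_norm_lt_one hq))

lemma tendsto_qFactorialInv (hq : ‖q‖ < 1) :
    Tendsto (qFactorialInv q) atTop (𝓝 (qPochhammerInf q q)⁻¹) := by
  rw [← Nat.map_cast_int_atTop, tendsto_map'_iff]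
  exact tendsto_qFactorialInv_natCast hq

lemma exists_norm_qFactorialInv_le (hq : ‖q‖ < 1) : ∃ C : ℝ, ∀ n : ℤ, ‖qFactorialInv q n‖ ≤ C := by
  obtain ⟨C, hC⟩ :=
    (Metric.isBounded_range_of_tendsto _ (tendsto_qFactorialInv_natCast hq)).exists_norm_le
  refine ⟨C, fun n => ?_⟩
  rcases lt_or_ge n 0 with hn | hn
  · rw [qFactorialInv_of_neg q hn, norm_zero]
    exact (norm_nonneg _).trans (hC _ ⟨0, rfl⟩)
  · lift n to ℕ using hn
    exact hC _ ⟨n, rfl⟩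

lemma exists_norm_tripleProductCoeff_le (hq : ‖q‖ < 1) :
    ∃ C : ℝ, ∀ (m n : ℕ) (j : ℤ), ‖tripleProductCoeff q m n j‖ ≤ C * ‖q ^ (j ^ 2)‖ := by
  obtain ⟨C, hC⟩ := exists_norm_qFactorialInv_le (norm_sq_lt_one hq)
  refine ⟨C * C, fun m n j => ?_⟩
  rw [tripleProductCoeff, norm_mul, norm_mul, mul_comm]
  have := (norm_nonneg _).trans (hC 0)
  gcongr <;> apply hC

lemma tendsto_tripleProductCoeff (hq : ‖q‖ < 1) (j : ℤ) :
    Tendsto (fun n : ℕ => tripleProductCoeff q n n j) atTop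
      (𝓝 ((qPochhammerInf (q ^ 2) (q ^ 2))⁻¹ ^ 2 * q ^ (j ^ 2))) := by
  have shift (i : ℤ) : Tendsto (fun n : ℕ => qFactorialInv (q ^ 2) (n + i)) atTop
      (𝓝 (qPochhammerInf (q ^ 2) (q ^ 2))⁻¹) :=
    (tendsto_qFactorialInv (norm_sq_lt_one hq)).comp
      (tendsto_atTop_add_const_right _ i tendsto_natCast_atTop_atTop)
  rw [sq, mul_comm]
  exact ((shift (-j)).mul (shift j)).const_mul _

lemma tendsto_tsum_tripleProductCoeff (hq₀ : q ≠ 0) (hq : ‖q‖ < 1) (hz : z ≠ 0) :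
    Tendsto (fun n : ℕ => ∑' j : ℤ, tripleProductCoeff q n n j * z ^ j) atTop
      (𝓝 ((qPochhammerInf (q ^ 2) (q ^ 2))⁻¹ ^ 2 * ∑' j : ℤ, q ^ (j ^ 2) * z ^ j)) := by
  obtain ⟨C, hC⟩ := exists_norm_tripleProductCoeff_le hq
  simp only [← tsum_mul_left, ← mul_assoc]
  refine tendsto_tsum_of_dominated_convergence
    ((summable_norm_zpow_sq_mul_zpow hq₀ hq hz).mul_left C)
    (fun j => (tendsto_tripleProductCoeff hq j).mul_const _) (.of_forall fun n j => ?_)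
  rw [norm_mul, norm_mul, ← mul_assoc]
  gcongr
  exact hC n n j

theorem hasSum_jacobi_triple_product (hq₀ : q ≠ 0) (hq : ‖q‖ < 1) (hz : z ≠ 0) :
    HasSum (fun j : ℤ => q ^ (j ^ 2) * z ^ j)
      (qPochhammerInf (q ^ 2) (q ^ 2) *
        (qPochhammerInf (-q * z) (q ^ 2) * qPochhammerInf (-q * z⁻¹) (q ^ 2))) := by
  have factor_ne_zero := one_sub_mul_pow_ne_zero_of_norm_lt_one (norm_sq_lt_one hq)
  have tendsto_prod (a : 𝕜) := tendsto_qPochhammer a (norm_sq_lt_one hq)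
  have inf_ne_zero := qPochhammerInf_ne_zero (norm_sq_lt_one hq) factor_ne_zero
  have tendsto_quotient := ((tendsto_prod (-q * z)).mul (tendsto_prod (-q * z⁻¹))).div
    ((tendsto_prod (q ^ 2)).comp (tendsto_atTop_mono (fun n => n.le_add_left n) tendsto_id))
    inf_ne_zero
  have tsum_eq := tendsto_nhds_unique (tendsto_tsum_tripleProductCoeff hq₀ hq hz)
    (tendsto_quotient.congr fun n =>
      (hasSum_finite_jacobi_triple_product hq₀ factor_ne_zero hz n n).tsum_eq.symm)
  rw [(summable_norm_zpow_sq_mul_zpow hq₀ hq hz).of_norm.hasSum_iff]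
  rw [inv_pow, inv_mul_eq_div, div_eq_div_iff (pow_ne_zero 2 inf_ne_zero) inf_ne_zero] at tsum_eq
  apply mul_right_cancel₀ inf_ne_zero
  linear_combination tsum_eq

end TripleProduct

section RealProduct

lemma tprod_one_add_pos {ι : Type*} {u : ι → ℝ} (hu : Summable u) (pos : ∀ i, 0 < 1 + u i) :
    0 < ∏' i, (1 + u i) := by
  rw [← rexp_tsum_eq_tprod pos (summable_log_one_add_of_summable hu)]
  exact exp_pos _

lemma tprod_one_add_lt_tprod_one_add {ι : Type*} {u v : ι → ℝ} (hu : Summable u)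
    (hv : Summable v) (pos : ∀ i, 0 < 1 + u i) (le : u ≤ v) {i : ι} (lt : u i < v i) :
    ∏' i, (1 + u i) < ∏' i, (1 + v i) := by
  have pos' (i : ι) : 0 < 1 + v i := (pos i).trans_le (by grw [le i])
  rw [← rexp_tsum_eq_tprod pos (summable_log_one_add_of_summable hu),
    ← rexp_tsum_eq_tprod pos' (summable_log_one_add_of_summable hv), exp_lt_exp]
  refine Summable.tsum_lt_tsum (i := i) (fun k => ?_) ?_ (summable_log_one_add_of_summable hu)
    (summable_log_one_add_of_summable hv)
  · exact log_le_log (pos k) (by grw [le k])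
  · exact log_lt_log (pos i) (by gcongr)

lemma summable_two_mul_pow_mul_add_pow {q : ℝ} (hq : ‖q‖ < 1) (c : ℝ) :
    Summable fun k : ℕ => 2 * q ^ (2 * k + 1) * c + q ^ (4 * k + 2) := by
  have odd := (summable_geometric_of_norm_lt_one hq).comp_injective
    (i := fun k : ℕ => 2 * k + 1) (fun _ _ h => by simpa using h)
  have even := (summable_geometric_of_norm_lt_one hq).comp_injective
    (i := fun k : ℕ => 4 * k + 2) (fun _ _ h => by simpa using h)
  exact ((odd.mul_left 2).mul_right c).add even

lemma one_add_two_mul_mul_add_sq_pos {r c : ℝ} (hr₀ : 0 ≤ r) (hr : r < 1) (hc : -1 ≤ c) :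
    0 < 1 + (2 * r * c + r ^ 2) :=
  calc 0 < (1 - r) ^ 2 := by have := sub_pos.2 hr; positivity
    _ ≤ 1 + (2 * r * c + r ^ 2) := by nlinarith

lemma strictMonoOn_tprod_one_add_two_mul_pow_mul_add_pow {q : ℝ} (hq₀ : 0 < q) (hq : q < 1) :
    StrictMonoOn (fun c : ℝ => ∏' k : ℕ, (1 + (2 * q ^ (2 * k + 1) * c + q ^ (4 * k + 2))))
      (Ici (-1)) := by
  intro c hc d _ hcd
  have norm_lt : ‖q‖ < 1 := by rwa [norm_of_nonneg hq₀.le]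
  have factor_pos (k : ℕ) : 0 < 1 + (2 * q ^ (2 * k + 1) * c + q ^ (4 * k + 2)) := by
    rw [show 4 * k + 2 = (2 * k + 1) * 2 by ring, pow_mul]
    exact one_add_two_mul_mul_add_sq_pos (by positivity)
      (pow_lt_one₀ hq₀.le hq (Nat.succ_ne_zero _)) hc
  exact tprod_one_add_lt_tprod_one_add (i := 0) (summable_two_mul_pow_mul_add_pow norm_lt c)
    (summable_two_mul_pow_mul_add_pow norm_lt d) factor_pos (fun k => by dsimp only; gcongr)
    (by gcongr)

lemma qPochhammerInf_pos {a q : ℝ} (hq : ‖q‖ < 1) (h : ∀ k : ℕ, 0 < 1 - a * q ^ k) :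
    0 < qPochhammerInf a q := by
  simp only [sub_eq_add_neg] at h
  simpa only [qPochhammerInf, sub_eq_add_neg] using
    tprod_one_add_pos (summable_norm_neg_mul_pow a hq).of_norm h

lemma ofReal_qPochhammerInf {a q : ℝ} (hq : ‖q‖ < 1) :
    ((qPochhammerInf a q : ℝ) : ℂ) = qPochhammerInf (a : ℂ) (q : ℂ) := by
  simpa [qPochhammerInf] using
    (multipliable_one_sub_mul_pow a hq).map_tprod Complex.ofRealHom Complex.continuous_ofReal

lemma qPochhammerInf_exp_mul_qPochhammerInf_exp_inv {q : ℝ} (hq : ‖q‖ < 1) (y : ℝ) :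
    qPochhammerInf (-q * Complex.exp (y * Complex.I)) ((q : ℂ) ^ 2) *
      qPochhammerInf (-q * (Complex.exp (y * Complex.I))⁻¹) ((q : ℂ) ^ 2) =
        ((∏' k : ℕ, (1 + (2 * q ^ (2 * k + 1) * cos y + q ^ (4 * k + 2))) : ℝ) : ℂ) := by
  have norm_lt : ‖(q : ℂ) ^ 2‖ < 1 := norm_sq_lt_one (by simpa using hq)
  have cast_tprod := (multipliable_one_add_of_summable
    (summable_two_mul_pow_mul_add_pow hq (cos y)).norm).map_tprod
      Complex.ofRealHom Complex.continuous_ofReal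
  rw [qPochhammerInf, qPochhammerInf, ← (multipliable_one_sub_mul_pow _ norm_lt).tprod_mul
    (multipliable_one_sub_mul_pow _ norm_lt)]
  refine (tprod_congr fun k => ?_).trans cast_tprod.symm
  have exp_ne_zero := Complex.exp_ne_zero (y * Complex.I)
  simp only [Complex.ofRealHom_eq_coe]
  push_cast
  rw [Complex.cos, neg_mul (y : ℂ), Complex.exp_neg]
  field_simp
  ring

end RealProduct

section CosKernel

open HurwitzZeta

lemma exp_neg_pi_mul_lt_one {t : ℝ} (ht : 0 < t) : exp (-π * t) < 1 := by
  rw [exp_lt_one_iff, neg_mul, neg_lt_zero]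
  positivity

theorem cosKernel_eq_tprod (a : ℝ) {t q : ℝ} (ht : 0 < t) (hq : q = exp (-π * t)) :
    cosKernel a t = qPochhammerInf (q ^ 2) (q ^ 2) *
      ∏' k : ℕ, (1 + (2 * q ^ (2 * k + 1) * cos (2 * π * a) + q ^ (4 * k + 2))) := by
  have norm_lt : ‖q‖ < 1 := by
    rw [hq, norm_of_nonneg (exp_pos _).le]
    exact exp_neg_pi_mul_lt_one ht
  have hq₀ : (q : ℂ) ≠ 0 := by simp [hq]
  have termwise (j : ℤ) : Complex.exp (2 * π * Complex.I * a * j) * exp (-π * j ^ 2 * t) =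
      (q : ℂ) ^ (j ^ 2) * Complex.exp ((2 * π * a : ℝ) * Complex.I) ^ j := by
    rw [mul_comm, ← Complex.exp_int_mul, hq]
    push_cast
    rw [← Complex.exp_int_mul]
    push_cast
    ring_nf
  have sum := hasSum_int_cosKernel a ht
  simp only [termwise] at sum
  apply Complex.ofReal_injective
  rw [Complex.ofReal_mul, ofReal_qPochhammerInf (norm_sq_lt_one norm_lt),
    ← qPochhammerInf_exp_mul_qPochhammerInf_exp_inv norm_lt, Complex.ofReal_pow]
  exact sum.unique (hasSum_jacobi_triple_product hq₀ (by simpa using norm_lt)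
    (Complex.exp_ne_zero _))

theorem strictAntiOn_cosKernel {t : ℝ} (ht : 0 < t) :
    StrictAntiOn (fun a : ℝ => cosKernel a t) (Icc 0 (1 / 2)) := by
  intro a ha b hb hab
  have exp_lt_one := exp_neg_pi_mul_lt_one ht
  have norm_lt : ‖exp (-π * t)‖ < 1 := by rwa [norm_of_nonneg (exp_pos _).le]
  have cos_lt : cos (2 * π * b) < cos (2 * π * a) := by
    refine strictAntiOn_cos ⟨?_, ?_⟩ ⟨?_, ?_⟩ ?_ <;> nlinarith [pi_pos, ha.1, hb.1, ha.2, hb.2]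
  have inf_pos : 0 < qPochhammerInf (exp (-π * t) ^ 2) (exp (-π * t) ^ 2) := by
    refine qPochhammerInf_pos (norm_sq_lt_one norm_lt) fun k => ?_
    rw [← pow_succ', ← pow_mul, sub_pos]
    exact pow_lt_one₀ (exp_pos _).le exp_lt_one (by simp)
  simp only [cosKernel_eq_tprod _ ht rfl]
  exact mul_lt_mul_of_pos_left (strictMonoOn_tprod_one_add_two_mul_pow_mul_add_pow (exp_pos _)
    exp_lt_one (neg_one_le_cos _) (neg_one_le_cos _) cos_lt) inf_pos

lemma thetaFn_eq_cosKernel (x : ℝ) {t : ℝ} (ht : 0 < t) :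
    thetaFn x t = cosKernel (x / 2 : ℝ) (π * t / 2) / 2 := by
  have sum := (hasSum_nat_cosKernel₀ (x / 2) (t := π * t / 2) (by positivity)).tsum_eq
  have termwise (n : ℕ) :
      2 * cos (2 * π * (x / 2) * (n + 1)) * exp (-π * (n + 1) ^ 2 * (π * t / 2)) =
        2 * (exp (-(π ^ 2) * (n + 1) ^ 2 * t / 2) * cos (π * (n + 1) * x)) := by
    ring_nf
  rw [tsum_congr termwise, tsum_mul_left] at sum
  rw [thetaFn]
  linarith

end CosKernel

/-- For every `t > 0`, `x ↦ θ(x,t)` is strictly decreasing on `[0,1]`. -/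
theorem stmt2 (t : ℝ) (ht : 0 < t) :
    StrictAntiOn (fun x => thetaFn x t) (Set.Icc (0:ℝ) 1) := by
  intro x hx y hy hxy
  have halved (w : ℝ) (hw : w ∈ Icc 0 1) : w / 2 ∈ Icc (0 : ℝ) (1 / 2) := by
    constructor <;> linarith [hw.1, hw.2]
  simp only [thetaFn_eq_cosKernel _ ht]
  have := strictAntiOn_cosKernel (t := π * t / 2) (by positivity) (halved x hx) (halved y hy)
    (by linarith)
  exact div_lt_div_of_pos_right this two_pos
end

section
/- The function θ̄ is strictly increasing on (0,∞), satisfies θ̄(t) → 0 as t → 0+ (so that setting θ̄(0) = 0 gives a continuous extension to [0,∞)), and θ̄(t) → 1 as t → ∞. -/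
open Real MeasureTheory Set Filter

/-- `θ̄(t) = ∑_{n≥1} (−1)^{n+1}·n²·exp(−π²(n²−1)t/2)`. -/
noncomputable def thetaBar (t : ℝ) : ℝ :=
  ∑' n : ℕ, (-1 : ℝ)^n * ((n : ℝ) + 1)^2 *
    Real.exp (-(π^2) * (((n : ℝ) + 1)^2 - 1) * t / 2)

/-!
Up to the factor `exp (π² t / 2) / (2π)`, `θ̄(t)` is the derivative at `x = π t / 2` of the theta
function `∑ (-1)ⁿ exp (-π n² x)`, summed over all integers `n`. Jacobi's identity rewrites that
function as `∑ x^(-1/2) exp (-π (n + 1/2)² / x)`. The derivative of each of these terms tends to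
`0` as `x → 0+` and is nonnegative and strictly increasing on `(0, π/12]`, which settles
`t ≤ 1/6`. For `t ≥ 1/6` consecutive terms of the original series decay fast enough that, after
the constant first term, the sum of the terms with `n = 2m` and `n = 2m + 1` is strictly
increasing in `t` for every `m ≥ 1`.
-/

open scoped Topology

lemma hasSum_even_add_odd {M : Type*} [AddCommMonoid M] [TopologicalSpace M] [ContinuousAdd M]
    [RegularSpace M] {f : ℕ → M} {s : M} (hf : HasSum f s) :
    HasSum (fun m ↦ f (2 * m) + f (2 * m + 1)) s := by
  have hprod := ((Nat.divModEquiv 2).symm.hasSum_iff.2 hf).prod_fiberwise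
    fun _ ↦ hasSum_fintype _
  simpa [Fin.sum_univ_two, mul_comm] using hprod

section ExponentialSeries

variable {ι : Type*} {c a : ι → ℝ} {x₀ x : ℝ}

lemma abs_mul_exp_neg_mul_le (ha : ∀ i, 0 ≤ a i) (hx : x₀ ≤ x) (i : ι) :
    |c i * exp (-(a i * x))| ≤ |c i * exp (-(a i * x₀))| := by
  have := ha i
  simp only [abs_mul, abs_exp]
  gcongr

lemma summable_neg_mul_mul_exp_neg_mul (ha : ∀ i, 0 ≤ a i)
    (hs : Summable fun i ↦ c i * exp (-(a i * x₀))) (hx : x₀ < x) :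
    Summable fun i ↦ -a i * (c i * exp (-(a i * x))) := by
  refine .of_norm_bounded (hs.abs.mul_left (exp (-1) / (x - x₀))) fun i ↦ ?_
  have hexp : exp (-(a i * x)) = exp (-(a i * (x - x₀))) * exp (-(a i * x₀)) := by
    rw [← exp_add]; ring_nf
  have hmax : a i * exp (-(a i * (x - x₀))) ≤ exp (-1) / (x - x₀) := by
    rw [le_div_iff₀ (sub_pos.2 hx), mul_right_comm]
    exact mul_exp_neg_le_exp_neg_one _
  calc ‖-a i * (c i * exp (-(a i * x)))‖
      = a i * exp (-(a i * (x - x₀))) * |c i * exp (-(a i * x₀))| := by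
        rw [hexp, norm_eq_abs]
        simp only [abs_mul, abs_neg, abs_of_nonneg (ha i), abs_exp]
        ring
    _ ≤ exp (-1) / (x - x₀) * |c i * exp (-(a i * x₀))| := by gcongr

lemma hasDerivAt_of_hasSum_mul_exp_neg_mul {F : ℝ → ℝ} (ha : ∀ i, 0 ≤ a i)
    (hF : ∀ y > x₀, HasSum (fun i ↦ c i * exp (-(a i * y))) (F y)) (hx : x₀ < x) :
    HasDerivAt F (∑' i, -a i * (c i * exp (-(a i * x)))) x := by
  obtain ⟨z, hz₀, hzx⟩ := exists_between hx
  obtain ⟨w, hw₀, hwz⟩ := exists_between hz₀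
  have hbound := (summable_neg_mul_mul_exp_neg_mul ha (hF w hw₀).summable hwz).abs
  have hderiv := hasDerivAt_tsum_of_isPreconnected (y₀ := x) hbound isOpen_Ioi isPreconnected_Ioi
    (g := fun i y ↦ c i * exp (-(a i * y))) (g' := fun i y ↦ -a i * (c i * exp (-(a i * y))))
    (fun i y _ ↦ (((hasDerivAt_id y).const_mul (a i)).neg.exp.const_mul (c i)).congr_deriv
      (by simp only [id_eq, Pi.neg_apply]; ring))
    (fun i y hy ↦ by
      simpa only [norm_eq_abs, ← mul_assoc] using
        abs_mul_exp_neg_mul_le (c := fun i ↦ -a i * c i) ha (mem_Ioi.1 hy).le i)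
    hzx (hF x hx).summable hzx
  refine hderiv.congr_of_eventuallyEq ?_
  filter_upwards [lt_mem_nhds hx] with y hy using (hF y hy).tsum_eq.symm

lemma hasSum_deriv_of_hasSum_mul_exp_neg_mul {F : ℝ → ℝ} (ha : ∀ i, 0 ≤ a i)
    (hF : ∀ y > x₀, HasSum (fun i ↦ c i * exp (-(a i * y))) (F y)) (hx : x₀ < x) :
    HasSum (fun i ↦ -a i * (c i * exp (-(a i * x)))) (deriv F x) := by
  obtain ⟨z, hz₀, hzx⟩ := exists_between hx
  rw [(hasDerivAt_of_hasSum_mul_exp_neg_mul ha hF hx).deriv]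
  exact (summable_neg_mul_mul_exp_neg_mul ha (hF z hz₀).summable hzx).hasSum

lemma tendsto_tsum_mul_exp_neg_mul_atTop {i₀ : ι} (h₀ : a i₀ = 0) (ha : ∀ i ≠ i₀, 0 < a i)
    (hs : Summable fun i ↦ c i * exp (-(a i * x₀))) :
    Tendsto (fun x ↦ ∑' i, c i * exp (-(a i * x))) atTop (𝓝 (c i₀)) := by
  classical
  have ha' : ∀ i, 0 ≤ a i := fun i ↦ by
    rcases eq_or_ne i i₀ with rfl | hi
    exacts [h₀.ge, (ha i hi).le]
  rw [← tsum_ite_eq i₀ c]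
  refine tendsto_tsum_of_dominated_convergence hs.abs (fun i ↦ ?_) ?_
  · split_ifs with hi
    · subst hi
      simp [h₀]
    · simpa using (tendsto_exp_neg_atTop_nhds_zero.comp
        (tendsto_id.const_mul_atTop (ha i hi))).const_mul (c i)
  · filter_upwards [eventually_ge_atTop x₀] with x hx i using abs_mul_exp_neg_mul_le ha' hx i

lemma strictMonoOn_mul_exp_sub_mul_exp {A B α β t₀ : ℝ} (hA : 0 ≤ A * α) (hαβ : α ≤ β)
    (h : B * β < A * α * exp ((β - α) * t₀)) :
    StrictMonoOn (fun t ↦ B * exp (-(β * t)) - A * exp (-(α * t))) (Ici t₀) := by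
  refine strictMonoOn_of_deriv_pos (convex_Ici _) (by fun_prop) fun t ht ↦ ?_
  rw [interior_Ici] at ht
  have hexp (γ : ℝ) : HasDerivAt (fun t ↦ exp (-(γ * t))) (-γ * exp (-(γ * t))) t :=
    ((hasDerivAt_id t).const_mul γ).neg.exp.congr_deriv
      (by simp only [id_eq, Pi.neg_apply]; ring)
  rw [HasDerivAt.deriv (((hexp β).const_mul B).fun_sub ((hexp α).const_mul A))]
  have hsplit : exp (-(α * t)) = exp ((β - α) * t) * exp (-(β * t)) := by
    rw [← exp_add]; ring_nf
  have hlt : B * β < A * α * exp ((β - α) * t) := h.trans_le <| by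
    have := sub_nonneg.2 hαβ
    have := (mem_Ioi.1 ht).le
    gcongr
  calc 0 < (A * α * exp ((β - α) * t) - B * β) * exp (-(β * t)) :=
        mul_pos (sub_pos.2 hlt) (exp_pos _)
    _ = B * (-β * exp (-(β * t))) - A * (-α * exp (-(α * t))) := by rw [hsplit]; ring

end ExponentialSeries

section DualTerm

/-- The derivative in `x` of `x ^ (-1/2) * exp (-b / x)`. With `b = π (n + a)²` these are the terms
of the dual series of the derivative of the theta function `HurwitzZeta.cosKernel a`. -/
noncomputable def thetaDualTerm (b x : ℝ) : ℝ :=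
  x ^ (-(3 / 2) : ℝ) * (b / x - 1 / 2) * exp (-(b / x))

variable {b x : ℝ}

lemma thetaDualTerm_nonneg (hx : x ∈ Ioc 0 (b / 3)) : 0 ≤ thetaDualTerm b x := by
  obtain ⟨hx₀, hxb⟩ := hx
  have : 1 / 2 ≤ b / x := by rw [le_div_iff₀ hx₀]; linarith
  have : 0 ≤ b / x - 1 / 2 := sub_nonneg.2 this
  unfold thetaDualTerm
  positivity

lemma hasDerivAt_thetaDualTerm (hx : 0 < x) :
    HasDerivAt (thetaDualTerm b)
      (x ^ (-(9 / 2) : ℝ) * exp (-(b / x)) * (b ^ 2 - 3 * b * x + 3 / 4 * x ^ 2)) x := by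
  have hpow := hasDerivAt_rpow_const (p := -(3 / 2)) (.inl hx.ne')
  have hdiv : HasDerivAt (fun x ↦ b / x) (-(b / x ^ 2)) x := by
    simpa [div_eq_mul_inv] using (hasDerivAt_inv hx.ne').const_mul b
  have h₃ : x ^ (-(3 / 2) : ℝ) = x ^ (-(9 / 2) : ℝ) * x ^ 3 := by
    rw [← rpow_natCast, ← rpow_add hx]; norm_num
  have h₅ : x ^ (-(3 / 2) - 1 : ℝ) = x ^ (-(9 / 2) : ℝ) * x ^ 2 := by
    rw [← rpow_natCast, ← rpow_add hx]; norm_num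
  refine ((hpow.mul (hdiv.sub_const (1 / 2))).mul hdiv.neg.exp).congr_deriv ?_
  simp only [Pi.mul_apply, Pi.neg_apply, h₃, h₅]
  field_simp
  ring

lemma strictMonoOn_thetaDualTerm (b : ℝ) : StrictMonoOn (thetaDualTerm b) (Ioc 0 (b / 3)) := by
  refine strictMonoOn_of_deriv_pos (convex_Ioc _ _)
    (fun x hx ↦ (hasDerivAt_thetaDualTerm hx.1).continuousAt.continuousWithinAt) fun x hx ↦ ?_
  rw [interior_Ioc] at hx
  obtain ⟨hx₀, hxb⟩ := hx
  rw [(hasDerivAt_thetaDualTerm hx₀).deriv]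
  have : 0 < b ^ 2 - 3 * b * x + 3 / 4 * x ^ 2 := by nlinarith
  positivity

lemma tendsto_thetaDualTerm_nhdsGT_zero (hb : 0 < b) :
    Tendsto (thetaDualTerm b) (𝓝[>] 0) (𝓝 0) := by
  have hatTop : Tendsto (fun y : ℝ ↦ b * (y ^ (5 / 2 : ℝ) * exp (-b * y)) -
      1 / 2 * (y ^ (3 / 2 : ℝ) * exp (-b * y))) atTop (𝓝 0) := by
    simpa only [mul_zero, sub_zero] using
      ((tendsto_rpow_mul_exp_neg_mul_atTop_nhds_zero (5 / 2) b hb).const_mul b).sub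
        ((tendsto_rpow_mul_exp_neg_mul_atTop_nhds_zero (3 / 2) b hb).const_mul (1 / 2))
  refine (hatTop.comp tendsto_inv_nhdsGT_zero).congr' ?_
  filter_upwards [self_mem_nhdsWithin] with x (hx : 0 < x)
  have h₅ : x⁻¹ ^ (5 / 2 : ℝ) = x⁻¹ ^ (3 / 2 : ℝ) * x⁻¹ := by
    rw [← rpow_add_one (inv_ne_zero hx.ne')]; norm_num
  have h₃ : x ^ (-(3 / 2) : ℝ) = x⁻¹ ^ (3 / 2 : ℝ) := by rw [rpow_neg hx.le, inv_rpow hx.le]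
  simp only [Function.comp_apply, thetaDualTerm, h₅, h₃]
  ring_nf

end DualTerm

section CosKernel

open HurwitzZeta

variable {a b x : ℝ}

lemma hasSum_nat_deriv_cosKernel (a : ℝ) (hx : 0 < x) :
    HasSum (fun n : ℕ ↦ -(π * (n + 1) ^ 2) *
      (2 * cos (2 * π * a * (n + 1)) * exp (-(π * (n + 1) ^ 2 * x)))) (deriv (cosKernel a) x) := by
  rw [← deriv_sub_const (1 : ℝ)]
  refine hasSum_deriv_of_hasSum_mul_exp_neg_mul (fun n ↦ by positivity) (fun y hy ↦ ?_) hx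
  simpa only [neg_mul] using hasSum_nat_cosKernel₀ a hy

-- The coefficient `1` puts the series in the shape `∑ c i * exp (-(a i * x))` used above.
lemma hasSum_int_evenKernel_exp_neg_mul (a : ℝ) (hx : 0 < x) :
    HasSum (fun n : ℤ ↦ 1 * exp (-(π * (n + a) ^ 2 * x))) (evenKernel a x) := by
  simpa only [neg_mul, one_mul] using hasSum_int_evenKernel a hx

lemma hasSum_int_deriv_evenKernel (a : ℝ) (hx : 0 < x) :
    HasSum (fun n : ℤ ↦ -(π * (n + a) ^ 2) * exp (-(π * (n + a) ^ 2 * x)))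
      (deriv (evenKernel a) x) := by
  simpa only [one_mul] using hasSum_deriv_of_hasSum_mul_exp_neg_mul (fun n ↦ by positivity)
    (fun y hy ↦ hasSum_int_evenKernel_exp_neg_mul a hy) hx

lemma differentiableAt_evenKernel (a : ℝ) (hx : 0 < x) :
    DifferentiableAt ℝ (evenKernel a) x :=
  (hasDerivAt_of_hasSum_mul_exp_neg_mul (fun n ↦ by positivity)
    (fun y hy ↦ hasSum_int_evenKernel_exp_neg_mul a hy) hx).differentiableAt

lemma cosKernel_eq_rpow_mul_evenKernel_inv (a : UnitAddCircle) (hx : 0 < x) :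
    cosKernel a x = x ^ (-(1 / 2) : ℝ) * evenKernel a x⁻¹ := by
  have : 0 < x ^ (1 / 2 : ℝ) := rpow_pos_of_pos hx _
  rw [evenKernel_functional_equation, one_div x⁻¹, inv_inv, inv_rpow hx.le, rpow_neg hx.le]
  field_simp

lemma deriv_cosKernel (a : ℝ) (hx : 0 < x) :
    deriv (cosKernel a) x = -(1 / 2) * x ^ (-(3 / 2) : ℝ) * evenKernel a x⁻¹ -
      x ^ (-(3 / 2) : ℝ) * x⁻¹ * deriv (evenKernel a) x⁻¹ := by
  have hpow := hasDerivAt_rpow_const (p := -(1 / 2)) (.inl hx.ne')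
  have heven := (differentiableAt_evenKernel a (inv_pos.2 hx)).hasDerivAt.comp x
    (hasDerivAt_inv hx.ne')
  have heq : cosKernel a =ᶠ[𝓝 x] fun y ↦ y ^ (-(1 / 2) : ℝ) * evenKernel a y⁻¹ := by
    filter_upwards [lt_mem_nhds hx] with y hy using cosKernel_eq_rpow_mul_evenKernel_inv a hy
  have h₁ : x ^ (-(1 / 2) : ℝ) = x ^ (-(3 / 2) : ℝ) * x := by
    rw [← rpow_add_one hx.ne']; norm_num
  have h₃ : (-(1 / 2) - 1 : ℝ) = -(3 / 2) := by norm_num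
  rw [((hpow.mul heven).congr_of_eventuallyEq heq).deriv, h₃, h₁]
  simp only [Function.comp_apply]
  field_simp
  ring

lemma hasSum_int_deriv_cosKernel (a : ℝ) (hx : 0 < x) :
    HasSum (fun n : ℤ ↦ thetaDualTerm (π * (n + a) ^ 2) x) (deriv (cosKernel a) x) := by
  have heven := (hasSum_int_evenKernel_exp_neg_mul a (inv_pos.2 hx)).mul_left
    (-(1 / 2) * x ^ (-(3 / 2) : ℝ))
  have hderiv := (hasSum_int_deriv_evenKernel a (inv_pos.2 hx)).mul_left
    (x ^ (-(3 / 2) : ℝ) * x⁻¹)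
  rw [deriv_cosKernel a hx]
  refine (heven.sub hderiv).congr_fun fun n ↦ ?_
  simp only [thetaDualTerm, div_eq_mul_inv]
  ring

lemma Ioc_div_three_subset (hb : ∀ n : ℤ, b ≤ π * (n + a) ^ 2) (n : ℤ) :
    Ioc 0 (b / 3) ⊆ Ioc 0 (π * (n + a) ^ 2 / 3) :=
  Ioc_subset_Ioc_right (by linarith [hb n])

lemma deriv_cosKernel_nonneg (hb : ∀ n : ℤ, b ≤ π * (n + a) ^ 2) (hx : x ∈ Ioc 0 (b / 3)) :
    0 ≤ deriv (cosKernel a) x :=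
  (hasSum_int_deriv_cosKernel a hx.1).nonneg fun n ↦
    thetaDualTerm_nonneg (Ioc_div_three_subset hb n hx)

lemma strictMonoOn_deriv_cosKernel (hb : ∀ n : ℤ, b ≤ π * (n + a) ^ 2) :
    StrictMonoOn (deriv (cosKernel a)) (Ioc 0 (b / 3)) := by
  intro x hx y hy hxy
  have hterm (n : ℤ) := (strictMonoOn_thetaDualTerm _).mono (Ioc_div_three_subset hb n) hx hy hxy
  exact hasSum_lt (fun n ↦ (hterm n).le) (hterm 0) (hasSum_int_deriv_cosKernel a hx.1)
    (hasSum_int_deriv_cosKernel a hy.1)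

lemma tendsto_deriv_cosKernel_nhdsGT_zero (hb₀ : 0 < b) (hb : ∀ n : ℤ, b ≤ π * (n + a) ^ 2) :
    Tendsto (deriv (cosKernel a)) (𝓝[>] 0) (𝓝 0) := by
  have hb₃ : b / 3 ∈ Ioc 0 (b / 3) := ⟨by positivity, le_rfl⟩
  have hlim : Tendsto (fun x ↦ ∑' n : ℤ, thetaDualTerm (π * (n + a) ^ 2) x) (𝓝[>] 0)
      (𝓝 (∑' _ : ℤ, 0)) := by
    refine tendsto_tsum_of_dominated_convergence (hasSum_int_deriv_cosKernel a hb₃.1).summable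
      (fun n ↦ tendsto_thetaDualTerm_nhdsGT_zero (hb₀.trans_le (hb n))) ?_
    filter_upwards [Ioc_mem_nhdsGT hb₃.1] with x hx n
    have hsub := Ioc_div_three_subset hb n
    rw [norm_of_nonneg (thetaDualTerm_nonneg (hsub hx))]
    exact (strictMonoOn_thetaDualTerm _).monotoneOn (hsub hx) (hsub hb₃) hx.2
  rw [tsum_zero] at hlim
  refine hlim.congr' ?_
  filter_upwards [self_mem_nhdsWithin] with x hx using (hasSum_int_deriv_cosKernel a hx).tsum_eq

end CosKernel

section Coefficients

/-- The coefficient `(-1)ⁿ (n + 1)²` of the `n`-th exponential in `θ̄`, counting from `n = 0`. -/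
noncomputable def thetaBarCoeff (n : ℕ) : ℝ := (-1) ^ n * ((n : ℝ) + 1) ^ 2

/-- The decay rate `π² ((n + 1)² - 1) / 2` of the `n`-th exponential in `θ̄`, counting from
`n = 0`. -/
noncomputable def thetaBarRate (n : ℕ) : ℝ := π ^ 2 * (((n : ℝ) + 1) ^ 2 - 1) / 2

lemma thetaBarCoeff_zero : thetaBarCoeff 0 = 1 := by simp [thetaBarCoeff]

lemma thetaBarRate_zero : thetaBarRate 0 = 0 := by simp [thetaBarRate]

lemma strictMono_thetaBarRate : StrictMono thetaBarRate := by
  intro m n hmn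
  unfold thetaBarRate
  gcongr

lemma thetaBar_eq_tsum (t : ℝ) :
    thetaBar t = ∑' n, thetaBarCoeff n * exp (-(thetaBarRate n * t)) := by
  unfold thetaBar thetaBarCoeff thetaBarRate
  congr! 3
  ring_nf

end Coefficients

section SmallTime

open HurwitzZeta

variable {t : ℝ}

lemma hasSum_thetaBarCoeff_mul_exp (ht : 0 < t) :
    HasSum (fun n ↦ thetaBarCoeff n * exp (-(thetaBarRate n * t)))
      ((2 * π)⁻¹ * exp (π ^ 2 * t / 2) * deriv (cosKernel (1 / 2 : ℝ)) (π * t / 2)) := by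
  refine ((hasSum_nat_deriv_cosKernel (1 / 2) (by positivity)).mul_left _).congr_fun fun n ↦ ?_
  have hcos : cos (2 * π * (1 / 2) * (n + 1)) = -(-1) ^ n := by
    rw [show 2 * π * (1 / 2) * (n + 1) = n * π + π by ring, cos_add_pi, cos_nat_mul_pi]
  have hexp : exp (-(thetaBarRate n * t)) =
      exp (π ^ 2 * t / 2) * exp (-(π * (n + 1) ^ 2 * (π * t / 2))) := by
    rw [← exp_add, thetaBarRate]; ring_nf
  rw [hcos, hexp, thetaBarCoeff]
  field_simp

lemma thetaBar_eq_deriv_cosKernel (ht : 0 < t) :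
    thetaBar t = (2 * π)⁻¹ * exp (π ^ 2 * t / 2) * deriv (cosKernel (1 / 2 : ℝ)) (π * t / 2) := by
  rw [thetaBar_eq_tsum, (hasSum_thetaBarCoeff_mul_exp ht).tsum_eq]

lemma hasSum_thetaBar (ht : 0 < t) :
    HasSum (fun n ↦ thetaBarCoeff n * exp (-(thetaBarRate n * t))) (thetaBar t) :=
  thetaBar_eq_deriv_cosKernel ht ▸ hasSum_thetaBarCoeff_mul_exp ht

lemma pi_div_four_le_pi_mul_int_add_half_sq (n : ℤ) : π / 4 ≤ π * (n + (1 / 2 : ℝ)) ^ 2 := by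
  have hn : (0 : ℝ) ≤ n * (n + 1) := by
    rcases le_or_gt 0 n with h | h
    · positivity
    · exact_mod_cast mul_nonneg_of_nonpos_of_nonpos h.le (by lia)
  nlinarith [mul_nonneg pi_pos.le hn]

lemma strictMonoOn_thetaBar_Ioc : StrictMonoOn thetaBar (Ioc 0 (1 / 6)) := by
  intro x hx y hy hxy
  have hmem : ∀ t ∈ Ioc (0 : ℝ) (1 / 6), π * t / 2 ∈ Ioc 0 (π / 4 / 3) := fun t ht ↦
    ⟨by have := ht.1; positivity, by nlinarith [ht.2, pi_pos]⟩
  rw [thetaBar_eq_deriv_cosKernel hx.1, thetaBar_eq_deriv_cosKernel hy.1]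
  have hderiv := strictMonoOn_deriv_cosKernel pi_div_four_le_pi_mul_int_add_half_sq
    (hmem x hx) (hmem y hy) (by gcongr)
  have hnonneg := deriv_cosKernel_nonneg pi_div_four_le_pi_mul_int_add_half_sq (hmem x hx)
  exact mul_lt_mul'' (by gcongr) hderiv (by positivity) hnonneg

lemma tendsto_thetaBar_nhdsGT_zero : Tendsto thetaBar (𝓝[>] 0) (𝓝 0) := by
  have hexp : Tendsto (fun t ↦ (2 * π)⁻¹ * exp (π ^ 2 * t / 2)) (𝓝[>] 0) (𝓝 (2 * π)⁻¹) :=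
    (Continuous.tendsto' (by fun_prop) 0 _ (by simp)).mono_left nhdsWithin_le_nhds
  have hscale : Tendsto (fun t ↦ π * t / 2) (𝓝[>] 0) (𝓝[>] 0) := by
    refine tendsto_nhdsWithin_iff.2
      ⟨(Continuous.tendsto' (by fun_prop) 0 0 (by simp)).mono_left nhdsWithin_le_nhds, ?_⟩
    filter_upwards [self_mem_nhdsWithin] with t (ht : 0 < t)
    exact mem_Ioi.2 (by positivity)
  have hderiv := (tendsto_deriv_cosKernel_nhdsGT_zero (by positivity)
    pi_div_four_le_pi_mul_int_add_half_sq).comp hscale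
  have hprod := hexp.mul hderiv
  rw [mul_zero] at hprod
  refine hprod.congr' ?_
  filter_upwards [self_mem_nhdsWithin] with t ht using (thetaBar_eq_deriv_cosKernel ht).symm

end SmallTime

section LargeTime

variable {t : ℝ}

lemma six_lt_exp_fifteen_div_four : 6 < exp (15 / 4) := by
  have := quadratic_le_exp_of_nonneg (x := 15 / 4) (by norm_num)
  linarith

lemma add_two_sq_mul_thetaBarRate_lt {n : ℕ} (hn : 1 ≤ n) :
    ((n : ℝ) + 2) ^ 2 * thetaBarRate (n + 1) <
      ((n : ℝ) + 1) ^ 2 * thetaBarRate n *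
        exp ((thetaBarRate (n + 1) - thetaBarRate n) * (1 / 6)) := by
  have hn' : (1 : ℝ) ≤ n := by exact_mod_cast hn
  have hgap : 15 / 4 ≤ (thetaBarRate (n + 1) - thetaBarRate n) * (1 / 6) := by
    have hpi : 9 ≤ π ^ 2 := by nlinarith [pi_gt_three]
    unfold thetaBarRate
    push_cast
    nlinarith
  have hexp : 6 < exp ((thetaBarRate (n + 1) - thetaBarRate n) * (1 / 6)) :=
    six_lt_exp_fifteen_div_four.trans_le (exp_le_exp.2 hgap)
  have hrate : 0 < ((n : ℝ) + 1) ^ 2 * thetaBarRate n := by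
    have : 0 < thetaBarRate n := thetaBarRate_zero ▸ strictMono_thetaBarRate hn
    positivity
  calc ((n : ℝ) + 2) ^ 2 * thetaBarRate (n + 1)
      = π ^ 2 / 2 * ((n : ℝ) + 1) * (n + 2) * ((n + 2) * (n + 3)) := by
        unfold thetaBarRate; push_cast; ring
    _ ≤ π ^ 2 / 2 * ((n : ℝ) + 1) * (n + 2) * (6 * (n * (n + 1))) := by
        gcongr _ * ?_
        nlinarith
    _ = ((n : ℝ) + 1) ^ 2 * thetaBarRate n * 6 := by unfold thetaBarRate; ring
    _ < _ := by gcongr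

lemma strictMonoOn_thetaBar_pair {n : ℕ} (hn : Odd n) :
    StrictMonoOn (fun t ↦ thetaBarCoeff n * exp (-(thetaBarRate n * t)) +
      thetaBarCoeff (n + 1) * exp (-(thetaBarRate (n + 1) * t))) (Ici (1 / 6)) := by
  have hmono := strictMonoOn_mul_exp_sub_mul_exp
    (mul_nonneg (sq_nonneg _) (thetaBarRate_zero ▸ strictMono_thetaBarRate.monotone n.zero_le))
    (strictMono_thetaBarRate n.lt_succ_self).le
    (add_two_sq_mul_thetaBarRate_lt hn.pos)
  refine hmono.congr fun t _ ↦ ?_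
  simp only [thetaBarCoeff, hn.neg_one_pow, hn.add_one.neg_one_pow]
  push_cast
  ring

lemma hasSum_thetaBar_sub_one (ht : 0 < t) :
    HasSum (fun m ↦ thetaBarCoeff (2 * m + 1) * exp (-(thetaBarRate (2 * m + 1) * t)) +
      thetaBarCoeff (2 * m + 1 + 1) * exp (-(thetaBarRate (2 * m + 1 + 1) * t)))
      (thetaBar t - 1) := by
  have htail := (hasSum_nat_add_iff' 1).2 (hasSum_thetaBar ht)
  rw [Finset.sum_range_one, thetaBarCoeff_zero, thetaBarRate_zero, zero_mul, neg_zero, exp_zero,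
    mul_one] at htail
  exact hasSum_even_add_odd htail

lemma strictMonoOn_thetaBar_Ici : StrictMonoOn thetaBar (Ici (1 / 6)) := by
  intro x hx y hy hxy
  have hpos : ∀ t ∈ Ici (1 / 6 : ℝ), 0 < t := fun t ht ↦ lt_of_lt_of_le (by norm_num) ht
  have hpair (m : ℕ) := strictMonoOn_thetaBar_pair (odd_two_mul_add_one m) hx hy hxy
  exact sub_lt_sub_iff_right 1 |>.1 <| hasSum_lt (fun m ↦ (hpair m).le) (hpair 0)
    (hasSum_thetaBar_sub_one (hpos x hx)) (hasSum_thetaBar_sub_one (hpos y hy))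

lemma tendsto_thetaBar_atTop : Tendsto thetaBar atTop (𝓝 1) := by
  rw [funext thetaBar_eq_tsum, ← thetaBarCoeff_zero]
  refine tendsto_tsum_mul_exp_neg_mul_atTop thetaBarRate_zero (fun n hn ↦ ?_)
    (hasSum_thetaBar one_pos).summable
  rw [← thetaBarRate_zero]
  exact strictMono_thetaBarRate (Nat.pos_of_ne_zero hn)

end LargeTime

/-- `θ̄` is strictly increasing on `(0,∞)`, tends to `0` as `t → 0+` and to `1`
as `t → ∞`. -/
theorem stmt3 :
    StrictMonoOn thetaBar (Set.Ioi (0:ℝ)) ∧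
    Filter.Tendsto thetaBar (nhdsWithin 0 (Set.Ioi 0)) (nhds 0) ∧
    Filter.Tendsto thetaBar Filter.atTop (nhds 1) := by
  refine ⟨?_, tendsto_thetaBar_nhdsGT_zero, tendsto_thetaBar_atTop⟩
  rw [← Ioc_union_Ici_eq_Ioi (show (0 : ℝ) < 1 / 6 by norm_num)]
  exact strictMonoOn_thetaBar_Ioc.union strictMonoOn_thetaBar_Ici
    (isGreatest_Ioc (by norm_num)) isLeast_Ici
end

section
/- For all a > 0, t > 0 and x, y ∈ [0,a]: |e^{π²t/(2a²)}·p^a_t(x,y) − (2/a)·sin(πx/a)·sin(πy/a)| ≤ E_{t/a²}·(2/a)·sin(πx/a)·sin(πy/a). -/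
open Real MeasureTheory Set Filter

/-- Transition density of Brownian motion killed upon exiting `(0,a)`. -/
noncomputable def pker (a t x y : ℝ) : ℝ :=
  (2/a) * ∑' n : ℕ, Real.exp (-(π^2) * ((n : ℝ) + 1)^2 * t / (2 * a^2)) *
    Real.sin (π * ((n : ℝ) + 1) * x / a) * Real.sin (π * ((n : ℝ) + 1) * y / a)

/-- `E_t = π²·∑_{n≥2} n²·exp(−π²(n²−1)t/2)` (for `t > 0`). -/
noncomputable def Efun (t : ℝ) : ℝ :=
  π^2 * ∑' n : ℕ, ((n : ℝ) + 2)^2 * Real.exp (-(π^2) * (((n : ℝ) + 2)^2 - 1) * t / 2)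

/-!
Relative to the first Dirichlet mode, the `n`-th mode decays in time by the factor
`exp (-π²(n² - 1)t / (2a²))`, while `|sin (n u)| ≤ n |sin u|` bounds its spatial part by `n²` times
that of the first mode. Summing over `n ≥ 2` gives the error `E_{t/a²} / π²` relative to the first
mode, for all real `x` and `y`; on `[0, a]` the first mode is nonnegative.
-/

theorem abs_sin_natCast_mul_le (n : ℕ) (u : ℝ) : |sin (n * u)| ≤ n * |sin u| := by
  induction n with
  | zero => simp
  | succ n ih =>
    calc |sin ((n + 1 : ℕ) * u)|
        = |sin (n * u) * cos u + cos (n * u) * sin u| := by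
          rw [Nat.cast_succ, add_one_mul, sin_add]
      _ ≤ |sin (n * u)| * |cos u| + |cos (n * u)| * |sin u| := by
          simpa only [abs_mul] using abs_add_le (sin (n * u) * cos u) (cos (n * u) * sin u)
      _ ≤ |sin (n * u)| * 1 + 1 * |sin u| := by gcongr <;> exact abs_cos_le_one _
      _ ≤ n * |sin u| * 1 + 1 * |sin u| := by gcongr
      _ = (n + 1 : ℕ) * |sin u| := by push_cast; ring

theorem norm_mul_sin_mul_sin_le (c u v : ℝ) (n : ℕ) :
    ‖c * sin (n * u) * sin (n * v)‖ ≤ n ^ 2 * |c| * |sin u * sin v| :=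
  calc ‖c * sin (n * u) * sin (n * v)‖
      = |c| * |sin (n * u)| * |sin (n * v)| := by rw [norm_eq_abs, abs_mul, abs_mul]
    _ ≤ |c| * (n * |sin u|) * (n * |sin v|) := by gcongr <;> exact abs_sin_natCast_mul_le n _
    _ = n ^ 2 * |c| * |sin u * sin v| := by rw [abs_mul]; ring

theorem abs_tsum_mul_sin_mul_sin_sub_first_le {c : ℕ → ℝ}
    (hc : Summable fun n : ℕ ↦ (n : ℝ) ^ 2 * |c n|) (u v : ℝ) :
    |∑' n : ℕ, c (n + 1) * sin ((n + 1 : ℕ) * u) * sin ((n + 1 : ℕ) * v) - c 1 * sin u * sin v| ≤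
      (∑' n : ℕ, ((n + 2 : ℕ) : ℝ) ^ 2 * |c (n + 2)|) * |sin u * sin v| := by
  have hmodes : Summable fun n : ℕ ↦ c n * sin (n * u) * sin (n * v) :=
    .of_norm_bounded (hc.mul_right _) fun n ↦ norm_mul_sin_mul_sin_le (c n) u v n
  have htail : ∑' n : ℕ, c (n + 1) * sin ((n + 1 : ℕ) * u) * sin ((n + 1 : ℕ) * v) -
      c 1 * sin u * sin v =
        ∑' n : ℕ, c (n + 2) * sin ((n + 2 : ℕ) * u) * sin ((n + 2 : ℕ) * v) := by
    rw [((summable_nat_add_iff 1).2 hmodes).tsum_eq_zero_add]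
    simp only [zero_add, Nat.cast_one, one_mul, add_sub_cancel_left, add_assoc, one_add_one_eq_two]
  have hbound : HasSum (fun n : ℕ ↦ ((n + 2 : ℕ) : ℝ) ^ 2 * |c (n + 2)| * |sin u * sin v|)
      ((∑' n : ℕ, ((n + 2 : ℕ) : ℝ) ^ 2 * |c (n + 2)|) * |sin u * sin v|) :=
    ((summable_nat_add_iff 2).2 hc).hasSum.mul_right _
  rw [htail]
  exact tsum_of_norm_bounded hbound fun n ↦ norm_mul_sin_mul_sin_le (c (n + 2)) u v (n + 2)

theorem summable_pow_mul_exp_neg_mul_sq (k : ℕ) {s : ℝ} (hs : 0 < s) :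
    Summable fun n : ℕ ↦ (n : ℝ) ^ k * exp (-s * n ^ 2) := by
  refine .of_nonneg_of_le (fun n ↦ by positivity) (fun n ↦ ?_)
    (summable_pow_mul_exp_neg_nat_mul k hs)
  have hn : (n : ℝ) ≤ n ^ 2 := mod_cast Nat.le_self_pow two_ne_zero n
  gcongr ?_ * exp ?_
  exact mul_le_mul_of_nonpos_left hn (neg_nonpos.2 hs.le)

/-- The factor by which the amplitude of the `n`-th Dirichlet mode `sin (π n x)` of the heat
semigroup of `1/2 d²/dx²` on `(0, 1)` decays up to time `t`, relative to the first mode. By Brownian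
scaling, the factor on `(0, a)` is obtained at time `t / a ^ 2`. -/
noncomputable def modeDecay (t : ℝ) (n : ℕ) : ℝ :=
  exp (-(π ^ 2 * t / 2) * (n ^ 2 - 1))

theorem modeDecay_pos (t : ℝ) (n : ℕ) : 0 < modeDecay t n := exp_pos _

theorem modeDecay_one (t : ℝ) : modeDecay t 1 = 1 := by simp [modeDecay]

theorem summable_sq_mul_modeDecay {t : ℝ} (ht : 0 < t) :
    Summable fun n : ℕ ↦ (n : ℝ) ^ 2 * modeDecay t n := by
  refine ((summable_pow_mul_exp_neg_mul_sq 2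
    (by positivity : 0 < π ^ 2 * t / 2)).mul_right (exp (π ^ 2 * t / 2))).congr fun n ↦ ?_
  rw [modeDecay, mul_assoc, ← exp_add]
  ring_nf

theorem exp_mul_pker_eq_tsum_modeDecay {a : ℝ} (ha : a ≠ 0) (t x y : ℝ) :
    exp (π ^ 2 * t / (2 * a ^ 2)) * pker a t x y =
      2 / a * ∑' n : ℕ, modeDecay (t / a ^ 2) (n + 1) *
        sin ((n + 1 : ℕ) * (π * x / a)) * sin ((n + 1 : ℕ) * (π * y / a)) := by
  have hexp (n : ℕ) : modeDecay (t / a ^ 2) (n + 1) =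
      exp (π ^ 2 * t / (2 * a ^ 2)) * exp (-(π ^ 2) * ((n : ℝ) + 1) ^ 2 * t / (2 * a ^ 2)) := by
    rw [modeDecay, ← exp_add]
    congr 1
    push_cast
    field_simp
    ring
  have hsin (n : ℕ) (z : ℝ) :
      sin ((n + 1 : ℕ) * (π * z / a)) = sin (π * ((n : ℝ) + 1) * z / a) := by
    push_cast
    ring_nf
  simp only [pker, hexp, hsin, mul_assoc, tsum_mul_left]
  ring

theorem Efun_div_pi_sq_eq_tsum_modeDecay (t : ℝ) :
    Efun t / π ^ 2 = ∑' n : ℕ, ((n + 2 : ℕ) : ℝ) ^ 2 * modeDecay t (n + 2) := by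
  rw [Efun, mul_div_cancel_left₀ _ (pow_ne_zero 2 pi_ne_zero)]
  refine tsum_congr fun n ↦ ?_
  rw [modeDecay]
  push_cast
  ring_nf

theorem Efun_div_pi_sq_le (t : ℝ) : Efun t / π ^ 2 ≤ Efun t := by
  have hE : 0 ≤ Efun t := mul_nonneg (sq_nonneg π) (tsum_nonneg fun n ↦ by positivity)
  exact div_le_self hE (one_le_pow₀ (by linarith [pi_gt_three]))

theorem sin_pi_mul_div_nonneg {a x : ℝ} (hx : x ∈ Icc 0 a) : 0 ≤ sin (π * x / a) := by
  have ha : 0 ≤ a := hx.1.trans hx.2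
  rw [mul_div_assoc]
  exact sin_nonneg_of_nonneg_of_le_pi (mul_nonneg pi_nonneg (div_nonneg hx.1 ha))
    (mul_le_of_le_one_right pi_nonneg (div_le_one_of_le₀ hx.2 ha))

theorem first_mode_nonneg {a x y : ℝ} (hx : x ∈ Icc 0 a) (hy : y ∈ Icc 0 a) :
    0 ≤ 2 / a * sin (π * x / a) * sin (π * y / a) :=
  mul_nonneg (mul_nonneg (div_nonneg zero_le_two (hx.1.trans hx.2)) (sin_pi_mul_div_nonneg hx))
    (sin_pi_mul_div_nonneg hy)

theorem stmt5_general {a : ℝ} (ha : a ≠ 0) {t : ℝ} (ht : 0 < t) (x y : ℝ) :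
    |exp (π ^ 2 * t / (2 * a ^ 2)) * pker a t x y -
        2 / a * sin (π * x / a) * sin (π * y / a)| ≤
      Efun (t / a ^ 2) / π ^ 2 * |2 / a * sin (π * x / a) * sin (π * y / a)| := by
  set u := π * x / a
  set v := π * y / a
  have hdecay : Summable fun n : ℕ ↦ (n : ℝ) ^ 2 * |modeDecay (t / a ^ 2) n| := by
    simpa only [abs_of_pos (modeDecay_pos _ _)] using
      summable_sq_mul_modeDecay (t := t / a ^ 2) (by positivity)
  have htail := abs_tsum_mul_sin_mul_sin_sub_first_le hdecay u v
  simp only [abs_of_pos (modeDecay_pos _ _), modeDecay_one, one_mul,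
    ← Efun_div_pi_sq_eq_tsum_modeDecay] at htail
  rw [exp_mul_pker_eq_tsum_modeDecay ha, mul_assoc (2 / a), ← mul_sub, abs_mul, abs_mul (2 / a),
    mul_left_comm]
  exact mul_le_mul_of_nonneg_left htail (abs_nonneg _)

/-- The density `p^a_t` is close to its first Fourier mode, with error `E_{t/a²}`. -/
theorem stmt5 (a : ℝ) (ha : 0 < a) (t : ℝ) (ht : 0 < t)
    (x : ℝ) (hx : x ∈ Set.Icc 0 a) (y : ℝ) (hy : y ∈ Set.Icc 0 a) :
    |Real.exp (π^2 * t / (2 * a^2)) * pker a t x y -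
        (2/a) * Real.sin (π * x / a) * Real.sin (π * y / a)| ≤
      Efun (t / a^2) * ((2/a) * Real.sin (π * x / a) * Real.sin (π * y / a)) := by
  simpa only [abs_of_nonneg (first_mode_nonneg hx hy)] using (stmt5_general ha.ne' ht x y).trans
    (mul_le_mul_of_nonneg_right (Efun_div_pi_sq_le _) (abs_nonneg _))
end

section
/- For all a > 0 and x, y ∈ [0,a], the Green function of Brownian motion killed upon exiting (0,a) satisfies ∫_0^∞ p^a_t(x,y) dt = (2/a)·min(x,y)·(a − max(x,y)). -/
open Real MeasureTheory Set Filter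

/-!
Integrating the eigenfunction expansion of `pker` in time replaces each factor `exp (-λₙ t)` by
`λₙ⁻¹`, where `λₙ` is proportional to `n²`. The resulting series `∑ sin (n θ) sin (n φ) / n²` is
half the difference of the series `∑ cos (n (θ ∓ φ)) / n²`, which are explicit quadratic
polynomials on `[0, 2π]`. Exchanging sum and integral is legitimate because the integrated series
converges absolutely.
-/

theorem integral_exp_neg_mul_Ioi_zero {c : ℝ} (hc : 0 < c) :
    ∫ t in Ioi (0 : ℝ), exp (-c * t) = c⁻¹ := by
  rw [integral_exp_mul_Ioi (neg_lt_zero.mpr hc), mul_zero, exp_zero, neg_div_neg_eq, one_div]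

theorem hasSum_integral_exp_neg_mul_smul {ι E : Type*} [Countable ι] [NormedAddCommGroup E]
    [NormedSpace ℝ E] [CompleteSpace E] {c : ι → ℝ} {v : ι → E} (hc : ∀ i, 0 < c i)
    (hv : Summable fun i => ‖(c i)⁻¹ • v i‖) :
    HasSum (fun i => (c i)⁻¹ • v i) (∫ t in Ioi (0 : ℝ), ∑' i, exp (-c i * t) • v i) := by
  have integrable_term (i : ι) : IntegrableOn (fun t => exp (-c i * t) • v i) (Ioi 0) :=
    (integrableOn_exp_mul_Ioi (neg_lt_zero.mpr (hc i)) 0).smul_const (v i)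
  have integral_term (i : ι) : ∫ t in Ioi (0 : ℝ), exp (-c i * t) • v i = (c i)⁻¹ • v i := by
    rw [integral_smul_const, integral_exp_neg_mul_Ioi_zero (hc i)]
  have integral_norm_term (i : ι) :
      ∫ t in Ioi (0 : ℝ), ‖exp (-c i * t) • v i‖ = ‖(c i)⁻¹ • v i‖ := by
    simp only [norm_smul, norm_of_nonneg (exp_nonneg _), norm_of_nonneg (inv_pos.mpr (hc i)).le,
      integral_mul_const, integral_exp_neg_mul_Ioi_zero (hc i)]
  simpa only [integral_term] using
    hasSum_integral_of_summable_integral_norm integrable_term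
      (hv.congr fun i => (integral_norm_term i).symm)

-- The term `n = 0` is `1 / 0 = 0`, so this is the usual sum over `n ≥ 1`.
theorem hasSum_cos_nat_mul_div_sq {θ : ℝ} (hθ : θ ∈ Icc 0 (2 * π)) :
    HasSum (fun n : ℕ => cos (n * θ) / (n : ℝ) ^ 2) (π ^ 2 / 6 - π * θ / 2 + θ ^ 2 / 4) := by
  have hθ' : θ / (2 * π) ∈ Icc (0 : ℝ) 1 :=
    ⟨div_nonneg hθ.1 two_pi_pos.le, (div_le_one two_pi_pos).mpr hθ.2⟩
  have bernoulli_series := hasSum_one_div_nat_pow_mul_cos one_ne_zero hθ'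
  rw [mul_one, ← bernoulliFun, bernoulliFun_two] at bernoulli_series
  convert! bernoulli_series using 1
  · funext n
    rw [show 2 * π * n * (θ / (2 * π)) = n * θ by field_simp, div_eq_mul_one_div, mul_comm]
  · rw [Nat.factorial_two]
    field_simp
    ring

theorem hasSum_sin_mul_sin_div_sq {θ φ : ℝ} (hφ : 0 ≤ φ) (hφθ : φ ≤ θ) (hθφ : θ + φ ≤ 2 * π) :
    HasSum (fun n : ℕ => sin (n * θ) * sin (n * φ) / (n : ℝ) ^ 2) (φ * (π - θ) / 2) := by
  have sub_series := hasSum_cos_nat_mul_div_sq (θ := θ - φ) ⟨by linarith, by linarith⟩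
  have add_series := hasSum_cos_nat_mul_div_sq (θ := θ + φ) ⟨by linarith, hθφ⟩
  convert! (sub_series.sub add_series).div_const 2 using 1
  · funext n
    rw [← sub_div, mul_sub, mul_add, ← two_mul_sin_mul_sin]
    ring
  · ring

/-- The `n`-th eigenvalue `π²(n+1)²/(2a²)` of `-½ d²/dx²` on `(0,a)` with Dirichlet boundary
conditions, the decay rate in time of the `n`-th mode of `pker`. Indexing starts at `0`. -/
noncomputable def dirichletEigenvalue (a : ℝ) (n : ℕ) : ℝ :=
  π ^ 2 * ((n : ℝ) + 1) ^ 2 / (2 * a ^ 2)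

/-- The eigenfunction `sin (π(n+1)x/a)` of `-½ d²/dx²` on `(0,a)` with Dirichlet boundary
conditions belonging to `dirichletEigenvalue a n`, left unnormalized: the factor `2/a` stays in
front of the series for `pker`. -/
noncomputable def dirichletMode (a : ℝ) (n : ℕ) (x : ℝ) : ℝ :=
  sin (π * ((n : ℝ) + 1) * x / a)

theorem dirichletEigenvalue_pos {a : ℝ} (ha : a ≠ 0) (n : ℕ) : 0 < dirichletEigenvalue a n := by
  unfold dirichletEigenvalue
  positivity

theorem pker_eq_tsum_dirichletMode (a t x y : ℝ) :
    pker a t x y = 2 / a * ∑' n, exp (-dirichletEigenvalue a n * t) *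
      (dirichletMode a n x * dirichletMode a n y) := by
  unfold pker dirichletEigenvalue dirichletMode
  congr! 3 with n
  rw [mul_assoc]
  ring_nf

theorem pker_comm (a t x y : ℝ) : pker a t x y = pker a t y x := by
  simp only [pker_eq_tsum_dirichletMode, mul_comm (dirichletMode a _ x)]

theorem hasSum_inv_dirichletEigenvalue_mul {a x y : ℝ} (ha : 0 < a) (hy : 0 ≤ y) (hyx : y ≤ x)
    (hxy : x + y ≤ 2 * a) :
    HasSum (fun n => (dirichletEigenvalue a n)⁻¹ * (dirichletMode a n x * dirichletMode a n y))
      (y * (a - x)) := by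
  have sin_series := hasSum_sin_mul_sin_div_sq (θ := π * x / a) (φ := π * y / a)
    (by positivity) (by gcongr) (by rw [← add_div, div_le_iff₀ ha]; nlinarith [pi_pos])
  have shifted_series := ((hasSum_nat_add_iff' 1).mpr sin_series).mul_left (2 * a ^ 2 / π ^ 2)
  convert! shifted_series using 1
  · funext n
    unfold dirichletEigenvalue dirichletMode
    push_cast
    rw [show π * ((n : ℝ) + 1) * x / a = (n + 1) * (π * x / a) by ring,
      show π * ((n : ℝ) + 1) * y / a = (n + 1) * (π * y / a) by ring]
    field_simp
  · simp only [Finset.sum_range_one, Nat.cast_zero, zero_mul, sin_zero, zero_div, sub_zero]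
    field_simp

theorem integral_pker_of_le {a x y : ℝ} (ha : 0 < a) (hy : 0 ≤ y) (hyx : y ≤ x)
    (hxy : x + y ≤ 2 * a) : ∫ t in Ioi (0 : ℝ), pker a t x y = 2 / a * (y * (a - x)) := by
  have green_series := hasSum_inv_dirichletEigenvalue_mul ha hy hyx hxy
  have integrated_series := hasSum_integral_exp_neg_mul_smul
    (dirichletEigenvalue_pos ha.ne') green_series.summable.norm
  simp only [pker_eq_tsum_dirichletMode]
  rw [integral_const_mul]
  exact congrArg (2 / a * ·) (integrated_series.unique green_series)

theorem stmt6_general {a x y : ℝ} (ha : 0 < a) (hx : 0 ≤ x) (hy : 0 ≤ y) (hxy : x + y ≤ 2 * a) :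
    ∫ t in Ioi (0 : ℝ), pker a t x y = 2 / a * min x y * (a - max x y) := by
  rw [mul_assoc]
  rcases le_total y x with hyx | hx_le_y
  · rw [min_eq_right hyx, max_eq_left hyx, integral_pker_of_le ha hy hyx hxy]
  · simp only [pker_comm a _ x y]
    rw [min_eq_left hx_le_y, max_eq_right hx_le_y, integral_pker_of_le ha hx hx_le_y (by linarith)]

/-- The Green function of Brownian motion killed upon exiting `(0,a)`:
`∫_0^∞ p^a_t(x,y) dt = (2/a)·min(x,y)·(a − max(x,y))`. -/
theorem stmt6 (a : ℝ) (ha : 0 < a) (x y : ℝ)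
    (hx : x ∈ Set.Icc 0 a) (hy : y ∈ Set.Icc 0 a) :
    ∫ t in Set.Ioi (0:ℝ), pker a t x y = (2/a) * min x y * (a - max x y) :=
  stmt6_general ha hx.1 hy.1 (by linarith [hx.2, hy.2])
end

section
/- There exists a constant C > 0 such that for all x ∈ [1/20, 1] and all t > 0: |e^{π²t/2}·θ'(x,t) + π·sin(πx)·θ̄(t)| ≤ C·(1−x)², where θ' denotes the partial derivative of θ in its first variable. -/
open Real MeasureTheory Set Filter

/-!
The function `H_t(z) = e^{π²t/2} (θ(z,t) - 1/2)` is entire in `z`. It is bounded uniformly in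
`t > 0` on a complex neighbourhood of `[δ, 2 - δ]`: for large `t` by its cosine series, for small
`t` because Poisson summation turns `θ` into a sum of Gaussians centred at the even integers.
Cauchy's estimate then bounds `H_t'` and `H_t''(1) = π² θ̄(t)`, hence the entire function
`G_t(z) = H_t'(z) + sin(πz)/π · H_t''(1)`, uniformly in `t`. On the real line `G_t` is the quantity
to be estimated, and it has a double zero at `1`, so the Schwarz lemma bounds it by `C |z - 1|²`.
-/

section ComplexAnalysis

open Metric

lemma isOpen_abs_im_lt (R : ℝ) : IsOpen {z : ℂ | |z.im| < R} :=
  isOpen_lt (by fun_prop) continuous_const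

lemma norm_cos_le_exp_abs_im (z : ℂ) : ‖Complex.cos z‖ ≤ exp |z.im| := by
  have h₁ : ‖Complex.exp (z * Complex.I)‖ ≤ exp |z.im| := by
    rw [Complex.norm_exp]
    simpa using neg_le_abs z.im
  have h₂ : ‖Complex.exp (-z * Complex.I)‖ ≤ exp |z.im| := by
    rw [Complex.norm_exp]
    simpa using le_abs_self z.im
  rw [Complex.cos, norm_div, Complex.norm_two]
  linarith [norm_add_le (Complex.exp (z * Complex.I)) (Complex.exp (-z * Complex.I))]

lemma norm_sin_le_exp_abs_im (z : ℂ) : ‖Complex.sin z‖ ≤ exp |z.im| := by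
  have h := norm_cos_le_exp_abs_im (π / 2 - z)
  rwa [Complex.cos_pi_div_two_sub, Complex.sub_im, show ((π : ℂ) / 2).im = 0 by simp, zero_sub,
    abs_neg] at h

variable {ι E : Type*} [NormedAddCommGroup E] [NormedSpace ℂ E]

lemma differentiableOn_iteratedDeriv [CompleteSpace E] {f : ℂ → E} {U : Set ℂ}
    (hf : DifferentiableOn ℂ f U) (hU : IsOpen U) (k : ℕ) :
    DifferentiableOn ℂ (iteratedDeriv k f) U := by
  induction k with
  | zero => simpa using hf
  | succ k ih =>
    rw [iteratedDeriv_succ]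
    exact ih.deriv hU

lemma hasSum_iteratedDeriv_of_summable_norm [CompleteSpace E] {F : ι → ℂ → E} {u : ι → ℝ}
    {U : Set ℂ} (hu : Summable u)
    (hF : ∀ i, DifferentiableOn ℂ (F i) U) (hU : IsOpen U) (hFu : ∀ i, ∀ w ∈ U, ‖F i w‖ ≤ u i)
    {z : ℂ} (hz : z ∈ U) (k : ℕ) :
    HasSum (fun i ↦ iteratedDeriv k (F i) z) (iteratedDeriv k (fun w ↦ ∑' i, F i w) z) := by
  suffices h : TendstoLocallyUniformlyOn (fun (s : Finset ι) w ↦ ∑ i ∈ s, iteratedDeriv k (F i) w)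
      (iteratedDeriv k fun w ↦ ∑' i, F i w) atTop U from h.tendsto_at hz
  have hdiff (k : ℕ) (i : ι) : DifferentiableOn ℂ (iteratedDeriv k (F i)) U :=
    differentiableOn_iteratedDeriv (hF i) hU k
  induction k with
  | zero => simpa using (tendstoUniformlyOn_tsum hu hFu).tendstoLocallyUniformlyOn
  | succ k ih =>
    simp only [iteratedDeriv_succ]
    refine (ih.deriv (.of_forall fun s ↦ .fun_sum fun i _ ↦ hdiff k i) hU).congr
      fun s w hw ↦ ?_
    exact deriv_fun_sum fun i _ ↦ (hdiff k i).differentiableAt (hU.mem_nhds hw)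

lemma norm_le_mul_sq_of_hasDerivAt_zero {f : ℂ → E} {c z : ℂ} {r B : ℝ} (hr : 0 < r)
    (hf : DifferentiableOn ℂ f (ball c r)) (hB : ∀ w ∈ ball c r, ‖f w‖ ≤ B) (hz : ‖f z‖ ≤ B)
    (hc : f c = 0) (hc' : HasDerivAt f 0 c) :
    ‖f z‖ ≤ B / r ^ 2 * ‖z - c‖ ^ 2 := by
  rcases lt_or_ge ‖z - c‖ r with hnear | hfar
  · have hmaps : MapsTo f (ball c r) (closedBall (f c) B) := fun w hw ↦ by
      simpa [hc] using hB w hw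
    have hlittle : (f · - f c) =o[nhds c] fun w ↦ ‖w - c‖ ^ 1 := by
      simpa using (hasDerivAt_iff_isLittleO.1 hc').norm_right
    have h := Complex.dist_le_mul_div_pow_of_mapsTo_ball_of_isLittleO hf hmaps hlittle
      (mem_ball_iff_norm.2 hnear)
    rw [hc, dist_zero_right, dist_eq_norm] at h
    exact h.trans_eq (by ring)
  · have hB0 : 0 ≤ B := (norm_nonneg _).trans hz
    calc ‖f z‖ ≤ B / r ^ 2 * r ^ 2 := by rwa [div_mul_cancel₀ _ (by positivity)]
      _ ≤ B / r ^ 2 * ‖z - c‖ ^ 2 := by gcongr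

end ComplexAnalysis

/-- The weight `e^{-π²(n²-1)t/2}` of the `n`-th mode after rescaling by `e^{π²t/2}`, with the index
shifted so that modes are numbered from `0`. -/
noncomputable def thetaWeight (t : ℝ) (n : ℕ) : ℝ :=
  exp (-(π ^ 2) * (((n : ℝ) + 1) ^ 2 - 1) * t / 2)

/-- The extension to complex arguments of `x ↦ e^{π²t/2} (θ(x,t) - 1/2)`, given by its cosine
series. -/
noncomputable def scaledTheta (t : ℝ) (z : ℂ) : ℂ :=
  ∑' n : ℕ, (thetaWeight t n : ℂ) * Complex.cos (π * (n + 1) * z)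

section CosineSeries

variable {t : ℝ}

lemma exp_mul_exp_eq_thetaWeight (t : ℝ) (n : ℕ) :
    exp (π ^ 2 * t / 2) * exp (-(π ^ 2) * ((n : ℝ) + 1) ^ 2 * t / 2) = thetaWeight t n := by
  rw [thetaWeight, ← exp_add]
  ring_nf

lemma thetaWeight_antitone (n : ℕ) : Antitone fun t ↦ thetaWeight t n := by
  intro s t hst
  have hn : (0 : ℝ) ≤ ((n : ℝ) + 1) ^ 2 - 1 := by nlinarith [n.cast_nonneg (α := ℝ)]
  have h : π ^ 2 * (((n : ℝ) + 1) ^ 2 - 1) * s ≤ π ^ 2 * (((n : ℝ) + 1) ^ 2 - 1) * t := by gcongr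
  exact exp_le_exp.2 (by linarith)

lemma summable_thetaWeight_mul_exp (ht : 0 < t) (R : ℝ) :
    Summable fun n : ℕ ↦ thetaWeight t n * exp (π * (n + 1) * R) := by
  have h := (summable_pow_mul_jacobiTheta₂_term_bound (R / 2) (T := π * t / 2) (by positivity) 0)
    |>.comp_injective (i := fun n : ℕ ↦ (n + 1 : ℤ)) (fun m n h ↦ by simpa using h)
  refine (h.mul_left (exp (π ^ 2 * t / 2))).congr fun n ↦ ?_
  have habs : |(n : ℤ) + 1| = n + 1 := abs_of_nonneg (by positivity)
  simp only [Function.comp_apply, habs, pow_zero, one_mul, thetaWeight, ← exp_add]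
  push_cast
  ring_nf

lemma norm_thetaWeight_mul_cos_le (t : ℝ) (n : ℕ) {z : ℂ} {R : ℝ} (hz : |z.im| ≤ R) :
    ‖(thetaWeight t n : ℂ) * Complex.cos (π * (n + 1) * z)‖ ≤
      thetaWeight t n * exp (π * (n + 1) * R) := by
  have hw : 0 ≤ thetaWeight t n := (exp_pos _).le
  have him : (π * (n + 1) * z : ℂ).im = π * (n + 1) * z.im := by
    rw [show (π * (n + 1) : ℂ) = ((π * (n + 1) : ℝ) : ℂ) by push_cast; rfl, Complex.im_ofReal_mul]
  rw [norm_mul, Complex.norm_of_nonneg hw]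
  gcongr
  refine (norm_cos_le_exp_abs_im _).trans (exp_le_exp.2 ?_)
  rw [him, abs_mul, abs_of_nonneg (by positivity)]
  gcongr

lemma hasSum_iteratedDeriv_scaledTheta (ht : 0 < t) (z : ℂ) (k : ℕ) :
    HasSum (fun n : ℕ ↦ iteratedDeriv k
        (fun w ↦ (thetaWeight t n : ℂ) * Complex.cos (π * (n + 1) * w)) z)
      (iteratedDeriv k (scaledTheta t) z) :=
  hasSum_iteratedDeriv_of_summable_norm (summable_thetaWeight_mul_exp ht (|z.im| + 1))
    (fun n ↦ by fun_prop) (isOpen_abs_im_lt _)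
    (fun n w hw ↦ norm_thetaWeight_mul_cos_le t n (le_of_lt hw)) (lt_add_one |z.im|) k

lemma differentiable_scaledTheta (ht : 0 < t) : Differentiable ℂ (scaledTheta t) := by
  intro z
  have h := Complex.differentiableOn_tsum_of_summable_norm
    (summable_thetaWeight_mul_exp ht (|z.im| + 1)) (fun n ↦ by fun_prop) (isOpen_abs_im_lt _)
    (fun n w hw ↦ norm_thetaWeight_mul_cos_le t n (le_of_lt hw))
  exact h.differentiableAt ((isOpen_abs_im_lt _).mem_nhds (lt_add_one |z.im|))

lemma scaledTheta_two_sub (t : ℝ) (z : ℂ) : scaledTheta t (2 - z) = scaledTheta t z := by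
  refine tsum_congr fun n ↦ ?_
  rw [← Complex.cos_nat_mul_two_pi_sub (π * (n + 1) * z) (n + 1)]
  push_cast
  ring_nf

lemma deriv_scaledTheta_one (t : ℝ) : deriv (scaledTheta t) 1 = 0 := by
  have h := deriv_comp_const_sub (scaledTheta t) 2 1
  simp only [scaledTheta_two_sub] at h
  rwa [show (2 - 1 : ℂ) = 1 by norm_num, self_eq_neg] at h

lemma iteratedDeriv_two_scaledTheta_one (ht : 0 < t) :
    iteratedDeriv 2 (scaledTheta t) 1 = (π ^ 2 * thetaBar t : ℝ) := by
  rw [← (hasSum_iteratedDeriv_scaledTheta ht 1 2).tsum_eq, thetaBar, ← tsum_mul_left,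
    Complex.ofReal_tsum]
  refine tsum_congr fun n ↦ ?_
  have hcos : Complex.cos (π * (n + 1) * 1) = (-1) ^ (n + 1) := by
    have h := cos_nat_mul_pi (n + 1)
    rw [mul_comm] at h
    rw [mul_one]
    exact_mod_cast h
  rw [iteratedDeriv_const_mul_field, iteratedDeriv_comp_const_mul Complex.contDiff_cos,
    show 2 = 2 * 1 from rfl, Complex.iteratedDeriv_even_cos]
  simp only [Pi.mul_apply, Pi.pow_apply, Pi.neg_apply, Pi.one_apply, hcos, thetaWeight]
  push_cast
  ring

lemma scaledTheta_ofReal (t x : ℝ) :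
    scaledTheta t x = (exp (π ^ 2 * t / 2) * (thetaFn x t - 1 / 2) : ℝ) := by
  rw [thetaFn, add_sub_cancel_left, ← tsum_mul_left, Complex.ofReal_tsum]
  refine tsum_congr fun n ↦ ?_
  rw [← mul_assoc, exp_mul_exp_eq_thetaWeight]
  push_cast
  rfl

lemma deriv_scaledTheta_ofReal (ht : 0 < t) (x : ℝ) :
    deriv (scaledTheta t) x = (exp (π ^ 2 * t / 2) * deriv (fun y ↦ thetaFn y t) x : ℝ) := by
  have hH : HasDerivAt (scaledTheta t) (deriv (scaledTheta t) x) x :=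
    (differentiable_scaledTheta ht _).hasDerivAt
  have hθ : (fun y ↦ thetaFn y t) =
      fun y : ℝ ↦ 1 / 2 + (exp (π ^ 2 * t / 2))⁻¹ * (scaledTheta t y).re := by
    ext y
    rw [scaledTheta_ofReal, Complex.ofReal_re]
    field_simp
    ring
  have hdiff : DifferentiableAt ℝ (fun y ↦ thetaFn y t) x := by
    rw [hθ]
    exact (hH.real_of_complex.differentiableAt.const_mul _).const_add _
  refine hH.comp_ofReal.unique ?_
  simp only [scaledTheta_ofReal]
  exact ((hdiff.hasDerivAt.sub_const _).const_mul _).ofReal_comp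

end CosineSeries

section UniformBounds

lemma exists_norm_scaledTheta_le_of_le {t₀ : ℝ} (ht₀ : 0 < t₀) (R : ℝ) :
    ∃ M, ∀ t, t₀ ≤ t → ∀ z : ℂ, |z.im| ≤ R → ‖scaledTheta t z‖ ≤ M := by
  refine ⟨_, fun t ht z hz ↦
    tsum_of_norm_bounded (summable_thetaWeight_mul_exp ht₀ R).hasSum fun n ↦ ?_⟩
  refine (norm_thetaWeight_mul_cos_le t n hz).trans ?_
  gcongr
  exact thetaWeight_antitone n ht

lemma jacobiTheta₂_term_add_neg (t : ℝ) (z : ℂ) (n : ℕ) :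
    jacobiTheta₂_term (n + 1 : ℕ) (z / 2) (π * t / 2 * Complex.I) +
        jacobiTheta₂_term (-(n + 1 : ℕ)) (z / 2) (π * t / 2 * Complex.I) =
      2 * (exp (-(π ^ 2 * t / 2)) * (thetaWeight t n * Complex.cos (π * (n + 1) * z))) := by
  have hterm (m : ℤ) : jacobiTheta₂_term m (z / 2) (π * t / 2 * Complex.I) =
      exp (-(π ^ 2) * m ^ 2 * t / 2) * Complex.exp (π * m * z * Complex.I) := by
    rw [jacobiTheta₂_term, Complex.ofReal_exp, ← Complex.exp_add]
    congr 1
    push_cast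
    linear_combination (π ^ 2 * t * m ^ 2 / 2 : ℂ) * Complex.I_sq
  rw [hterm, hterm, ← exp_mul_exp_eq_thetaWeight, exp_neg, Complex.cos]
  push_cast
  field_simp

lemma one_add_two_mul_scaledTheta_eq_jacobiTheta₂ {t : ℝ} (ht : 0 < t) (z : ℂ) :
    1 + 2 * (exp (-(π ^ 2 * t / 2)) * scaledTheta t z) =
      jacobiTheta₂ (z / 2) (π * t / 2 * Complex.I) := by
  have him : 0 < (π * t / 2 * Complex.I : ℂ).im := by
    rw [show (π * t / 2 : ℂ) = ((π * t / 2 : ℝ) : ℂ) by push_cast; rfl, Complex.im_ofReal_mul]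
    simp only [Complex.I_im, mul_one]
    positivity
  have hpair := (hasSum_nat_add_iff' 1).2 (hasSum_jacobiTheta₂_term (z / 2) him).nat_add_neg
  simp only [jacobiTheta₂_term_add_neg] at hpair
  rw [scaledTheta, ← tsum_mul_left, ← tsum_mul_left, hpair.tsum_eq]
  have hzero : jacobiTheta₂_term 0 (z / 2) (π * t / 2 * Complex.I) = 1 := by
    simp [jacobiTheta₂_term]
  simp only [Finset.sum_range_one, Nat.cast_zero, neg_zero, hzero]
  ring

lemma jacobiTheta₂_eq_tsum_gaussian {t : ℝ} (ht : 0 < t) (z : ℂ) :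
    jacobiTheta₂ (z / 2) (π * t / 2 * Complex.I) =
      (√(π * t / 2))⁻¹ * ∑' n : ℤ, Complex.exp (-(2 * n - z) ^ 2 / (2 * t)) := by
  have ha : 0 < (π * t / 2 : ℂ).re := by
    rw [show (π * t / 2 : ℂ) = ((π * t / 2 : ℝ) : ℂ) by push_cast; rfl, Complex.ofReal_re]
    positivity
  have hsqrt : (π * t / 2 : ℂ) ^ (1 / 2 : ℂ) = √(π * t / 2) := by
    rw [sqrt_eq_rpow, Complex.ofReal_cpow (by positivity)]
    push_cast
    rfl
  have hterm (n : ℤ) : jacobiTheta₂_term n (z / 2) (π * t / 2 * Complex.I) =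
      Complex.exp (-π * (π * t / 2) * n ^ 2 + 2 * π * (Complex.I * z / 2) * n) := by
    rw [jacobiTheta₂_term]
    congr 1
    linear_combination (π ^ 2 * t * n ^ 2 / 2 : ℂ) * Complex.I_sq
  have hgauss (n : ℤ) : -π / (π * t / 2) * (n + Complex.I * (Complex.I * z / 2)) ^ 2 =
      -(2 * n - z) ^ 2 / (2 * t) := by
    have hshift : (n + Complex.I * (Complex.I * z / 2) : ℂ) = (2 * n - z) / 2 := by
      linear_combination (z / 2) * Complex.I_sq
    rw [hshift]
    field_simp
  rw [jacobiTheta₂, tsum_congr hterm, Complex.tsum_exp_neg_quadratic ha, hsqrt, one_div]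
  simp only [hgauss, Complex.ofReal_inv]

lemma mul_one_add_sq_le_sq_sub_sq {a b x y : ℝ} (hab : b < a) (hx : x ∈ Icc a (2 - a))
    (hy : |y| ≤ b) (n : ℤ) :
    (a ^ 2 - b ^ 2) / 2 * (1 + n ^ 2) ≤ (2 * n - x) ^ 2 - y ^ 2 := by
  have hb : 0 ≤ b := (abs_nonneg _).trans hy
  have hy_sq : y ^ 2 ≤ b ^ 2 := sq_le_sq' (abs_le.1 hy).1 (abs_le.1 hy).2
  have hab_sq : b ^ 2 ≤ a ^ 2 := by gcongr
  rcases eq_or_ne n 0 with rfl | hn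
  · have hx_sq : a ^ 2 ≤ x ^ 2 := pow_le_pow_left₀ (hb.trans hab.le) hx.1 2
    rw [Int.cast_zero]
    linarith
  · have hn1 : (1 : ℝ) ≤ |(n : ℝ)| := by exact_mod_cast Int.one_le_abs hn
    have hdist : a * |(n : ℝ)| ≤ |2 * n - x| := by
      have htri : |2 * (n : ℝ)| - |x| ≤ |2 * n - x| := abs_sub_abs_le_abs_sub _ _
      rw [abs_mul, abs_two, abs_of_nonneg (by linarith [hx.1] : 0 ≤ x)] at htri
      nlinarith [hx.1, hx.2]
    have hdist_sq : a ^ 2 * n ^ 2 ≤ (2 * n - x) ^ 2 := by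
      simpa only [mul_pow, sq_abs] using
        pow_le_pow_left₀ (mul_nonneg (hb.trans hab.le) (abs_nonneg _)) hdist 2
    have hn_sq : (1 : ℝ) ≤ (n : ℝ) ^ 2 := (one_le_sq_iff_one_le_abs _).2 hn1
    nlinarith

lemma norm_tsum_gaussian_le {a b : ℝ} (hab : b < a) {t : ℝ} (ht : 0 < t) (ht1 : t ≤ 1) {z : ℂ}
    (hre : z.re ∈ Icc a (2 - a)) (him : |z.im| ≤ b) :
    ‖∑' n : ℤ, Complex.exp (-(2 * n - z) ^ 2 / (2 * t))‖ ≤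
      exp (-((a ^ 2 - b ^ 2) / 4 / t)) * ∑' n : ℤ, exp (-((a ^ 2 - b ^ 2) / 4 * n ^ 2)) := by
  have hb : 0 ≤ b := (abs_nonneg _).trans him
  have hc : 0 < (a ^ 2 - b ^ 2) / 4 := by nlinarith
  have hsum : Summable fun n : ℤ ↦ exp (-((a ^ 2 - b ^ 2) / 4 * n ^ 2)) := by
    refine (summable_pow_mul_jacobiTheta₂_term_bound 0
      (T := (a ^ 2 - b ^ 2) / 4 / π) (by positivity) 0).congr fun n ↦ ?_
    field_simp
    ring_nf
  refine tsum_of_norm_bounded (hsum.hasSum.mul_left _) fun n ↦ ?_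
  have hnorm : (-(2 * n - z) ^ 2 / (2 * t) : ℂ).re =
      -((2 * n - z.re) ^ 2 - z.im ^ 2) / (2 * t) := by
    rw [show (2 * t : ℂ) = ((2 * t : ℝ) : ℂ) by push_cast; rfl, Complex.div_ofReal_re]
    simp [sq]
  rw [Complex.norm_exp, hnorm, ← exp_add, exp_le_exp]
  set c := (a ^ 2 - b ^ 2) / 4 with hc_def
  have hquad : 2 * c * (1 + n ^ 2) ≤ (2 * n - z.re) ^ 2 - z.im ^ 2 := by
    convert mul_one_add_sq_le_sq_sub_sq hab hre him n using 2
    rw [hc_def]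
    ring
  calc -((2 * n - z.re) ^ 2 - z.im ^ 2) / (2 * t) ≤ -(2 * c * (1 + n ^ 2)) / (2 * t) := by
        gcongr
    _ = -(c / t) + -(c * n ^ 2 / t) := by
        field_simp
        ring
    _ ≤ -(c / t) + -(c * n ^ 2) := by
        gcongr
        exact le_div_self (by positivity) ht ht1

lemma inv_sqrt_mul_exp_neg_div_le {c t : ℝ} (hc : 0 < c) (ht : 0 < t) (ht1 : t ≤ 1) :
    (√(π * t / 2))⁻¹ * exp (-(c / t)) ≤ c⁻¹ := by
  have hsqrt : t ≤ √(π * t / 2) := le_sqrt_of_sq_le (by nlinarith [pi_gt_three])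
  have hexp : c / t ≤ exp (c / t) := by linarith [add_one_le_exp (c / t)]
  calc (√(π * t / 2))⁻¹ * exp (-(c / t)) ≤ t⁻¹ * (c / t)⁻¹ := by
        rw [exp_neg]
        gcongr
    _ = c⁻¹ := by field_simp

lemma exists_norm_scaledTheta_le_of_le_one {a b : ℝ} (hab : b < a) :
    ∃ M, ∀ t, 0 < t → t ≤ 1 → ∀ z : ℂ, z.re ∈ Icc a (2 - a) → |z.im| ≤ b →
      ‖scaledTheta t z‖ ≤ M := by
  set c := (a ^ 2 - b ^ 2) / 4 with hc_def
  set S := ∑' n : ℤ, exp (-(c * n ^ 2))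
  refine ⟨exp (π ^ 2 / 2) * ((c⁻¹ * S + 1) / 2), fun t ht ht1 z hre him ↦ ?_⟩
  have hb : 0 ≤ b := (abs_nonneg _).trans him
  have hc : 0 < c := by nlinarith
  set J := jacobiTheta₂ (z / 2) (π * t / 2 * Complex.I) with hJ_def
  have hJ : ‖J‖ ≤ c⁻¹ * S := by
    rw [hJ_def, jacobiTheta₂_eq_tsum_gaussian ht, norm_mul,
      Complex.norm_of_nonneg (by positivity)]
    calc (√(π * t / 2))⁻¹ * ‖∑' n : ℤ, Complex.exp (-(2 * n - z) ^ 2 / (2 * t))‖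
        ≤ (√(π * t / 2))⁻¹ * (exp (-(c / t)) * S) := by
          gcongr
          exact norm_tsum_gaussian_le hab ht ht1 hre him
      _ = (√(π * t / 2))⁻¹ * exp (-(c / t)) * S := by ring
      _ ≤ c⁻¹ * S := by
          gcongr
          exact inv_sqrt_mul_exp_neg_div_le hc ht ht1
  have hscaled : scaledTheta t z = exp (π ^ 2 * t / 2) * ((J - 1) / 2) := by
    rw [hJ_def, ← one_add_two_mul_scaledTheta_eq_jacobiTheta₂ ht, exp_neg]
    push_cast
    field_simp
    ring
  have hJ1 : ‖(J - 1) / 2‖ ≤ (c⁻¹ * S + 1) / 2 := by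
    rw [norm_div, Complex.norm_two]
    gcongr
    exact (norm_sub_le _ _).trans (by simpa using hJ)
  rw [hscaled, norm_mul, Complex.norm_of_nonneg (exp_pos _).le]
  gcongr
  nlinarith [sq_nonneg π]

lemma exists_norm_scaledTheta_le {a b : ℝ} (hab : b < a) :
    ∃ M, ∀ t, 0 < t → ∀ z : ℂ, z.re ∈ Icc a (2 - a) → |z.im| ≤ b → ‖scaledTheta t z‖ ≤ M := by
  obtain ⟨M₁, hM₁⟩ := exists_norm_scaledTheta_le_of_le one_pos b
  obtain ⟨M₂, hM₂⟩ := exists_norm_scaledTheta_le_of_le_one hab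
  refine ⟨max M₁ M₂, fun t ht z hre him ↦ ?_⟩
  rcases le_total 1 t with h | h
  · exact (hM₁ t h z him).trans (le_max_left _ _)
  · exact (hM₂ t ht h z hre him).trans (le_max_right _ _)

lemma re_mem_Icc_and_abs_im_le {a a' b r : ℝ} {w z : ℂ} (hwz : ‖w - z‖ ≤ r)
    (hre : z.re ∈ Icc a a') (him : |z.im| ≤ b) :
    w.re ∈ Icc (a - r) (a' + r) ∧ |w.im| ≤ b + r := by
  have hre_sub := abs_le.1 ((Complex.abs_re_le_norm (w - z)).trans hwz)
  have him_sub := (Complex.abs_im_le_norm (w - z)).trans hwz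
  rw [Complex.sub_re] at hre_sub
  rw [Complex.sub_im] at him_sub
  refine ⟨⟨?_, ?_⟩, ?_⟩
  · linarith [hre.1]
  · linarith [hre.2]
  · linarith [abs_sub_abs_le_abs_sub w.im z.im]

lemma exists_norm_iteratedDeriv_scaledTheta_le (k : ℕ) {a b : ℝ} (hab : b < a) :
    ∃ M, ∀ t, 0 < t → ∀ z : ℂ, z.re ∈ Icc a (2 - a) → |z.im| ≤ b →
      ‖iteratedDeriv k (scaledTheta t) z‖ ≤ M := by
  induction k generalizing a b with
  | zero => simpa only [iteratedDeriv_zero] using exists_norm_scaledTheta_le hab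
  | succ k ih =>
    obtain ⟨r, hr, hr3⟩ : ∃ r, 0 < r ∧ 3 * r = a - b := ⟨(a - b) / 3, by linarith, by ring⟩
    obtain ⟨M, hM⟩ := ih (a := a - r) (b := b + r) (by linarith)
    refine ⟨M / r, fun t ht z hre him ↦ ?_⟩
    have hdiff : Differentiable ℂ (iteratedDeriv k (scaledTheta t)) := differentiableOn_univ.1 <|
      differentiableOn_iteratedDeriv (differentiable_scaledTheta ht).differentiableOn isOpen_univ k
    rw [iteratedDeriv_succ]
    refine Complex.norm_deriv_le_of_forall_mem_sphere_norm_le hr hdiff.diffContOnCl fun w hw ↦ ?_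
    obtain ⟨hre_w, him_w⟩ := re_mem_Icc_and_abs_im_le (mem_sphere_iff_norm.1 hw).le hre him
    exact hM t ht w (by rwa [sub_sub_eq_add_sub, add_sub_right_comm]) him_w

end UniformBounds

/-- The function `G_t(z) = H_t'(z) + sin(πz)/π · H_t''(1)` for `H_t = scaledTheta t`; the sine term
cancels the linear part of `H_t'` at `1`, and is `π sin(πz) θ̄(t)` since `H_t''(1) = π² θ̄(t)`. -/
noncomputable def thetaRemainder (t : ℝ) (z : ℂ) : ℂ :=
  deriv (scaledTheta t) z + Complex.sin (π * z) / π * iteratedDeriv 2 (scaledTheta t) 1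

section Remainder

variable {t : ℝ}

lemma thetaRemainder_one (t : ℝ) : thetaRemainder t 1 = 0 := by
  simp [thetaRemainder, deriv_scaledTheta_one]

lemma differentiable_thetaRemainder (ht : 0 < t) : Differentiable ℂ (thetaRemainder t) := by
  have hdiff := (differentiable_scaledTheta ht).deriv
  unfold thetaRemainder
  fun_prop

lemma hasDerivAt_thetaRemainder_one (ht : 0 < t) : HasDerivAt (thetaRemainder t) 0 1 := by
  set q := iteratedDeriv 2 (scaledTheta t) 1 with hq_def
  have hderiv : HasDerivAt (deriv (scaledTheta t)) q 1 := by
    rw [hq_def, iteratedDeriv_succ, iteratedDeriv_one]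
    exact ((differentiable_scaledTheta ht).deriv 1).hasDerivAt
  have hsin : HasDerivAt (fun z : ℂ ↦ Complex.sin (π * z) / π * q) (-q) 1 := by
    have h := (((hasDerivAt_id (1 : ℂ)).const_mul (π : ℂ)).csin.div_const (π : ℂ)).mul_const q
    refine h.congr_deriv ?_
    have hπ : (π : ℂ) ≠ 0 := by exact_mod_cast pi_ne_zero
    simp [hπ]
  exact (hderiv.add hsin).congr_deriv (add_neg_cancel q)

lemma thetaRemainder_ofReal (ht : 0 < t) (x : ℝ) :
    thetaRemainder t x = (exp (π ^ 2 * t / 2) * deriv (fun y ↦ thetaFn y t) x +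
      π * sin (π * x) * thetaBar t : ℝ) := by
  rw [thetaRemainder, deriv_scaledTheta_ofReal ht, iteratedDeriv_two_scaledTheta_one ht]
  push_cast
  field_simp

lemma exists_norm_thetaRemainder_le {a b : ℝ} (hab : b < a) :
    ∃ M, ∀ t, 0 < t → ∀ z : ℂ, z.re ∈ Icc a (2 - a) → |z.im| ≤ b → ‖thetaRemainder t z‖ ≤ M := by
  obtain ⟨M₁, hM₁⟩ := exists_norm_iteratedDeriv_scaledTheta_le 1 hab
  obtain ⟨M₂, hM₂⟩ := exists_norm_iteratedDeriv_scaledTheta_le 2 one_pos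
  refine ⟨M₁ + exp (π * b) / π * M₂, fun t ht z hre him ↦ ?_⟩
  have hderiv : ‖deriv (scaledTheta t) z‖ ≤ M₁ := by
    simpa only [iteratedDeriv_one] using hM₁ t ht z hre him
  have hderiv2 : ‖iteratedDeriv 2 (scaledTheta t) 1‖ ≤ M₂ := hM₂ t ht 1 (by norm_num) (by simp)
  have hsin : ‖Complex.sin (π * z)‖ ≤ exp (π * b) := by
    refine (norm_sin_le_exp_abs_im _).trans (exp_le_exp.2 ?_)
    rw [Complex.im_ofReal_mul, abs_mul, abs_of_pos pi_pos]
    gcongr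
  refine (norm_add_le _ _).trans (add_le_add hderiv ?_)
  rw [norm_mul, norm_div, Complex.norm_of_nonneg pi_pos.le]
  gcongr

lemma exists_norm_thetaRemainder_le_mul_sq {δ : ℝ} (hδ : 0 < δ) :
    ∃ C, ∀ t, 0 < t → ∀ x : ℝ, x ∈ Icc δ (2 - δ) → ‖thetaRemainder t x‖ ≤ C * (1 - x) ^ 2 := by
  obtain ⟨M, hM⟩ := exists_norm_thetaRemainder_le (a := δ / 2) (b := δ / 4) (by linarith)
  refine ⟨M / (δ / 4) ^ 2, fun t ht x hx ↦ ?_⟩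
  have hball : ∀ w ∈ Metric.ball (1 : ℂ) (δ / 4), ‖thetaRemainder t w‖ ≤ M := fun w hw ↦ by
    obtain ⟨hre, him⟩ := re_mem_Icc_and_abs_im_le (a := 1) (a' := 1) (b := 0)
      (mem_ball_iff_norm.1 hw).le (by simp) (by simp)
    refine hM t ht w (Icc_subset_Icc ?_ ?_ hre) (by rwa [zero_add] at him) <;>
      linarith [hx.1, hx.2]
  have hx_bound : ‖thetaRemainder t x‖ ≤ M := by
    refine hM t ht x (Icc_subset_Icc ?_ ?_ hx) ?_
    · linarith
    · linarith
    · rw [Complex.ofReal_im, abs_zero]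
      positivity
  have h := norm_le_mul_sq_of_hasDerivAt_zero (by positivity)
    (differentiable_thetaRemainder ht).differentiableOn hball hx_bound (thetaRemainder_one t)
    (hasDerivAt_thetaRemainder_one ht)
  rwa [← Complex.ofReal_one, ← Complex.ofReal_sub, Complex.norm_real, norm_eq_abs, sq_abs,
    ← neg_sub, neg_sq] at h

end Remainder

theorem stmt7_general {δ : ℝ} (hδ : 0 < δ) :
    ∃ C : ℝ, 0 < C ∧ ∀ x ∈ Icc δ (2 - δ), ∀ t : ℝ, 0 < t →
      |exp (π ^ 2 * t / 2) * deriv (fun y ↦ thetaFn y t) x + π * sin (π * x) * thetaBar t| ≤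
        C * (1 - x) ^ 2 := by
  obtain ⟨C, hC⟩ := exists_norm_thetaRemainder_le_mul_sq hδ
  refine ⟨max C 1, by positivity, fun x hx t ht ↦ ?_⟩
  have h := hC t ht x hx
  rw [thetaRemainder_ofReal ht, Complex.norm_real, norm_eq_abs] at h
  refine h.trans ?_
  gcongr
  exact le_max_left _ _

/-- There is `C > 0` such that for `x ∈ [1/20,1]` and `t > 0`:
`|e^{π²t/2}·θ'(x,t) + π·sin(πx)·θ̄(t)| ≤ C·(1−x)²`. -/
theorem stmt7 :
    ∃ C : ℝ, 0 < C ∧ ∀ x ∈ Set.Icc (1/20 : ℝ) 1, ∀ t : ℝ, 0 < t →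
      |Real.exp (π^2 * t / 2) * deriv (fun y => thetaFn y t) x +
          π * Real.sin (π * x) * thetaBar t| ≤ C * (1 - x)^2 := by
  obtain ⟨C, hC, h⟩ := stmt7_general (δ := 1 / 20) (by norm_num)
  exact ⟨C, hC, fun x hx ↦ h x ⟨hx.1, hx.2.trans (by norm_num)⟩⟩
end

section
/- There exists a universal constant C such that for every x ∈ [0,1] and every measurable set S ⊆ (0,∞) of finite Lebesgue measure λ(S): |I(x,S) − π·λ(S)·sin(πx)| ≤ C·min( x , E_{inf S}·min(1, λ(S))·sin(πx) ), where min(x, +∞) is interpreted as x when inf S = 0. -/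
open Real MeasureTheory Set Filter

/-- Density at time `t` of the first hitting time of `1` before `0` by Brownian
motion started at `x`:
`r_t(x) = π·∑_{n≥1} (−1)^{n+1}·n·exp(−π²n²t/2)·sin(πnx)`. -/
noncomputable def rfun (t x : ℝ) : ℝ :=
  π * ∑' n : ℕ, (-1 : ℝ)^n * ((n : ℝ) + 1) *
    Real.exp (-(π^2) * ((n : ℝ) + 1)^2 * t / 2) * Real.sin (π * ((n : ℝ) + 1) * x)

/-- `I(x,S) = ∫_S e^{π²s/2}·r_s(x) ds`. -/
noncomputable def Ifun (x : ℝ) (S : Set ℝ) : ℝ :=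
  ∫ s in S, Real.exp (π^2 * s / 2) * rfun s x

/-! Subtracting `π sin(πx)` from `e^{π²t/2} r_t(x)` removes the lowest frequency. Since
`|sin(nπx)| ≤ n |sin(πx)|` and `n² - 1 ≥ 3` for `n ≥ 2`, the remainder is at most
`E_t |sin(πx)| / π` and decays exponentially, so its integral over `[a, ∞)` is at most
`E_a |sin(πx)|`.

This bound blows up as `t → 0`. There, Poisson summation (the functional equation between
Mathlib's `sinKernel` and `oddKernel`) turns `r_t(x)` into a reflection series of Lévy densities,
`∑_{n ∈ ℤ} p_{2n+1-x}(t)`. Pairing `2n+1-x` with `2n+1+x` leaves differences of size `O(x / n³)`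
uniformly in `t`. Only the pair `n = 0` is singular, as `x → 1`, and when `x ≥ 1/2` its integral is
at most `2 ≤ 4x` because each Lévy density has total mass at most `1`. -/

section LevyDensity

/-- The density at time `t` of the first hitting time of level `a > 0` by a Brownian motion started
at `0`. It is extended to all real `a` as an odd function, which makes the reflection series for
`rfun` a single sum over `ℤ`. -/
noncomputable def levyDensity (a t : ℝ) : ℝ :=
  a / √(2 * π * t ^ 3) * Real.exp (-(a ^ 2 / (2 * t)))

variable {a b m t : ℝ}

lemma levyDensity_neg (a t : ℝ) : levyDensity (-a) t = -levyDensity a t := by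
  simp only [levyDensity, neg_sq, neg_div, neg_mul]

lemma levyDensity_nonneg (ha : 0 ≤ a) (t : ℝ) : 0 ≤ levyDensity a t := by
  unfold levyDensity
  positivity

lemma rpow_three_halves_eq_sqrt {y : ℝ} (hy : 0 ≤ y) : y ^ (3 / 2 : ℝ) = √(y ^ 3) := by
  rw [Real.sqrt_eq_rpow, ← Real.rpow_natCast, ← Real.rpow_mul hy]
  norm_num

lemma levyDensity_eq_gaussian_comp_rpow (a : ℝ) (ht : 0 < t) :
    levyDensity a t = (|(-1 / 2 : ℝ)| * t ^ (-1 / 2 - 1 : ℝ)) •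
      (2 * a / √(2 * π) * Real.exp (-(a ^ 2 / 2) * (t ^ (-1 / 2 : ℝ)) ^ 2)) := by
  have hsq : (t ^ (-1 / 2 : ℝ)) ^ 2 = t⁻¹ := by
    rw [← Real.rpow_natCast, ← Real.rpow_mul ht.le, ← Real.rpow_neg_one]
    norm_num
  have hpow : t ^ (-1 / 2 - 1 : ℝ) = (√(t ^ 3))⁻¹ := by
    rw [← rpow_three_halves_eq_sqrt ht.le, ← Real.rpow_neg ht.le]
    norm_num
  have hexp : -(a ^ 2 / (2 * t)) = -(a ^ 2 / 2) * t⁻¹ := by ring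
  have habs : |(-1 / 2 : ℝ)| = 1 / 2 := by norm_num [abs_of_neg]
  rw [levyDensity, hsq, hpow, hexp, habs, Real.sqrt_mul (by positivity), smul_eq_mul]
  field_simp

lemma integrableOn_levyDensity (a : ℝ) : IntegrableOn (levyDensity a) (Ioi 0) := by
  rcases eq_or_ne a 0 with rfl | ha
  · exact integrableOn_zero.congr_fun (fun t _ ↦ by simp [levyDensity]) measurableSet_Ioi
  refine IntegrableOn.congr_fun ?_
    (fun t ht ↦ (levyDensity_eq_gaussian_comp_rpow a ht).symm) measurableSet_Ioi
  rw [integrableOn_Ioi_comp_rpow_iff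
    (fun y ↦ 2 * a / √(2 * π) * Real.exp (-(a ^ 2 / 2) * y ^ 2)) (by norm_num)]
  exact ((integrable_exp_neg_mul_sq (by positivity)).const_mul _).integrableOn

lemma integrableOn_levyDensity_sub (a b : ℝ) {T : Set ℝ} (hT : T ⊆ Ioi 0) :
    IntegrableOn (fun t ↦ levyDensity a t - levyDensity b t) T :=
  ((integrableOn_levyDensity a).sub (integrableOn_levyDensity b)).mono_set hT

lemma integral_levyDensity (ha : 0 < a) : ∫ t in Ioi 0, levyDensity a t = 1 := by
  rw [setIntegral_congr_fun measurableSet_Ioi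
      (fun t ht ↦ levyDensity_eq_gaussian_comp_rpow a ht),
    integral_comp_rpow_Ioi (fun y ↦ 2 * a / √(2 * π) * Real.exp (-(a ^ 2 / 2) * y ^ 2))
      (by norm_num),
    integral_const_mul, integral_gaussian_Ioi]
  have hsqrt : √(π / (a ^ 2 / 2)) = √(2 * π) / a := by
    rw [show π / (a ^ 2 / 2) = 2 * π / a ^ 2 by field_simp, Real.sqrt_div (by positivity),
      Real.sqrt_sq ha.le]
  rw [hsqrt]
  field_simp

lemma setIntegral_levyDensity_le_one (ha : 0 ≤ a) {T : Set ℝ} (hT : T ⊆ Ioi 0) :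
    ∫ t in T, levyDensity a t ≤ 1 := by
  calc ∫ t in T, levyDensity a t ≤ ∫ t in Ioi 0, levyDensity a t :=
        setIntegral_mono_set (integrableOn_levyDensity a)
          (ae_of_all _ (levyDensity_nonneg ha)) hT.eventuallyLE
    _ ≤ 1 := by
        rcases ha.eq_or_lt with rfl | ha
        · simp [levyDensity]
        · exact (integral_levyDensity ha).le

lemma hasDerivAt_levyDensity_left (a t : ℝ) :
    HasDerivAt (levyDensity · t)
      ((1 - a ^ 2 / t) * Real.exp (-(a ^ 2 / (2 * t))) / √(2 * π * t ^ 3)) a := by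
  have hexp : HasDerivAt (fun a : ℝ ↦ -(a ^ 2 / (2 * t))) (-(2 * a / (2 * t))) a := by
    simpa using ((hasDerivAt_pow 2 a).div_const (2 * t)).fun_neg
  refine (((hasDerivAt_id a).div_const √(2 * π * t ^ 3)).mul hexp.exp).congr_deriv ?_
  simp only [id]
  ring

lemma pow_three_mul_abs_one_sub_sq_mul_exp_le (r : ℝ) :
    r ^ 3 * |1 - r ^ 2| * Real.exp (-(r ^ 2 / 2)) ≤ 24 := by
  have habs : |1 - r ^ 2| ≤ 1 + r ^ 2 := by
    rw [abs_le]
    constructor <;> nlinarith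
  have hcube : 2 * r ^ 3 ≤ r ^ 2 + r ^ 4 := by nlinarith [sq_nonneg (r - r ^ 2)]
  have htaylor := Real.sum_le_exp_of_nonneg (x := r ^ 2 / 2) (by positivity) 4
  norm_num [Finset.sum_range_succ, Nat.factorial] at htaylor
  rw [Real.exp_neg, ← div_eq_mul_inv, div_le_iff₀ (Real.exp_pos _)]
  calc r ^ 3 * |1 - r ^ 2| ≤ (r ^ 2 + r ^ 4) / 2 * (1 + r ^ 2) := by gcongr; linarith
    _ ≤ 24 * Real.exp (r ^ 2 / 2) := by nlinarith

lemma abs_deriv_levyDensity_left_le (ha : 0 < a) (ht : 0 < t) :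
    |(1 - a ^ 2 / t) * Real.exp (-(a ^ 2 / (2 * t))) / √(2 * π * t ^ 3)| ≤ 24 / a ^ 3 := by
  set r := a / √t
  have hr : r ^ 2 = a ^ 2 / t := by rw [div_pow, Real.sq_sqrt ht.le]
  have hsqrt : √(2 * π * t ^ 3) = √(2 * π) * (a / r) ^ 3 := by
    rw [div_div_cancel₀ ha.ne', Real.sqrt_mul (by positivity),
      ← rpow_three_halves_eq_sqrt ht.le, Real.rpow_div_two_eq_sqrt _ ht.le, Real.rpow_ofNat]
  have hpi : 1 ≤ √(2 * π) := Real.one_le_sqrt.2 (by linarith [Real.pi_gt_three])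
  have hr0 : 0 < r := by positivity
  calc |(1 - a ^ 2 / t) * Real.exp (-(a ^ 2 / (2 * t))) / √(2 * π * t ^ 3)|
      = r ^ 3 * |1 - r ^ 2| * Real.exp (-(r ^ 2 / 2)) / (√(2 * π) * a ^ 3) := by
        rw [hsqrt, abs_div, abs_mul, Real.abs_exp,
          abs_of_pos (by positivity : 0 < √(2 * π) * (a / r) ^ 3), hr,
          show a ^ 2 / (2 * t) = a ^ 2 / t / 2 by ring]
        field_simp
    _ ≤ 24 / (1 * a ^ 3) := by
        gcongr
        exact pow_three_mul_abs_one_sub_sq_mul_exp_le r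
    _ = 24 / a ^ 3 := by rw [one_mul]

lemma abs_levyDensity_sub_le (hm : 0 < m) (ha : m ≤ a) (hb : m ≤ b) (ht : 0 < t) :
    |levyDensity a t - levyDensity b t| ≤ 24 / m ^ 3 * |a - b| := by
  refine Convex.norm_image_sub_le_of_norm_hasDerivWithin_le (s := Ici m)
    (fun y _ ↦ (hasDerivAt_levyDensity_left y t).hasDerivWithinAt) (fun y hy ↦ ?_)
    (convex_Ici m) hb ha
  have hy : m ≤ y := hy
  calc _ ≤ 24 / y ^ 3 := abs_deriv_levyDensity_left_le (hm.trans_le hy) ht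
    _ ≤ 24 / m ^ 3 := by gcongr

end LevyDensity

section HittingDensity

variable {t : ℝ}

lemma hasSum_half_sinKernel (x : ℝ) (ht : 0 < t) :
    HasSum (fun n : ℕ ↦ (-1 : ℝ) ^ n * ((n : ℝ) + 1) *
      Real.exp (-(π ^ 2) * ((n : ℝ) + 1) ^ 2 * t / 2) * Real.sin (π * ((n : ℝ) + 1) * x))
      (HurwitzZeta.sinKernel (((1 - x) / 2 : ℝ) : UnitAddCircle) (π * t / 2) / 2) := by
  have h := HurwitzZeta.hasSum_nat_sinKernel ((1 - x) / 2) (t := π * t / 2) (by positivity)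
  rw [← hasSum_nat_add_iff' 1] at h
  simp only [Finset.range_one, Finset.sum_singleton, Nat.cast_zero, mul_zero, zero_mul,
    sub_zero] at h
  refine (h.div_const 2).congr_fun fun n ↦ ?_
  have hsin : Real.sin (2 * π * ((1 - x) / 2) * ((n + 1 : ℕ) : ℝ))
      = (-1 : ℝ) ^ n * Real.sin (π * ((n : ℝ) + 1) * x) := by
    rw [show 2 * π * ((1 - x) / 2) * ((n + 1 : ℕ) : ℝ)
      = ((n + 1 : ℕ) : ℝ) * π - π * ((n : ℝ) + 1) * x by push_cast; ring,
      Real.sin_nat_mul_pi_sub, pow_succ]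
    ring
  rw [hsin, show -π * ((n + 1 : ℕ) : ℝ) ^ 2 * (π * t / 2) = -(π ^ 2) * ((n : ℝ) + 1) ^ 2 * t / 2 by
    push_cast; ring]
  push_cast
  ring

lemma hasSum_rfun (x : ℝ) (ht : 0 < t) :
    HasSum (fun n : ℕ ↦ π * ((-1 : ℝ) ^ n * ((n : ℝ) + 1) *
      Real.exp (-(π ^ 2) * ((n : ℝ) + 1) ^ 2 * t / 2) * Real.sin (π * ((n : ℝ) + 1) * x)))
      (rfun t x) :=
  (hasSum_half_sinKernel x ht).summable.hasSum.mul_left π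

lemma rfun_eq_sinKernel (x : ℝ) (ht : 0 < t) :
    rfun t x = π / 2 *
      HurwitzZeta.sinKernel (((1 - x) / 2 : ℝ) : UnitAddCircle) (π * t / 2) := by
  rw [rfun, (hasSum_half_sinKernel x ht).tsum_eq]
  ring

lemma continuousOn_rfun (x : ℝ) : ContinuousOn (rfun · x) (Ioi 0) := by
  refine ContinuousOn.congr (continuousOn_const.mul ?_) fun t ht ↦ rfun_eq_sinKernel x ht
  refine (HurwitzZeta.continuousOn_sinKernel _).comp (f := fun t ↦ π * t / 2)
    (by fun_prop) fun t ht ↦ ?_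
  have ht : 0 < t := ht
  exact mem_Ioi.2 (by positivity)

lemma rfun_eq_oddKernel (x : ℝ) (ht : 0 < t) :
    rfun t x = 2 / √(2 * π * t ^ 3) *
      HurwitzZeta.oddKernel (((1 - x) / 2 : ℝ) : UnitAddCircle) (2 / (π * t)) := by
  have hrpow : (2 / (π * t)) ^ (3 / 2 : ℝ) = 4 / (π * √(2 * π * t ^ 3)) := by
    have hsq : (2 / (π * t)) ^ 3 = 4 ^ 2 / (π ^ 2 * (2 * π * t ^ 3)) := by
      field_simp
      norm_num
    rw [rpow_three_halves_eq_sqrt (by positivity), hsq, Real.sqrt_div (by positivity),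
      Real.sqrt_mul (by positivity), Real.sqrt_sq (by norm_num), Real.sqrt_sq pi_pos.le]
  rw [rfun_eq_sinKernel x ht, HurwitzZeta.oddKernel_functional_equation, one_div_div, hrpow]
  field_simp
  ring

lemma hasSum_int_levyDensity (x : ℝ) (ht : 0 < t) :
    HasSum (fun n : ℤ ↦ levyDensity (2 * n + 1 - x) t) (rfun t x) := by
  rw [rfun_eq_oddKernel x ht]
  refine ((HurwitzZeta.hasSum_int_oddKernel ((1 - x) / 2)
    (x := 2 / (π * t)) (by positivity)).mul_left _).congr_fun fun n ↦ ?_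
  have hexp : -π * (n + (1 - x) / 2) ^ 2 * (2 / (π * t)) = -((2 * n + 1 - x) ^ 2 / (2 * t)) := by
    field_simp
    ring
  rw [hexp, levyDensity]
  ring

lemma hasSum_nat_levyDensity (x : ℝ) (ht : 0 < t) :
    HasSum (fun n : ℕ ↦ levyDensity (2 * n + 1 - x) t - levyDensity (2 * n + 1 + x) t)
      (rfun t x) := by
  refine (hasSum_int_levyDensity x ht).nat_add_neg_add_one.congr_fun fun n ↦ ?_
  rw [sub_eq_add_neg, ← levyDensity_neg]
  push_cast
  ring_nf

end HittingDensity

section NearZero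

variable {x t : ℝ}

lemma summable_one_div_add_one_pow_three : Summable fun n : ℕ ↦ 1 / ((n : ℝ) + 1) ^ 3 := by
  simpa using (summable_nat_add_iff 1).2 (Real.summable_one_div_nat_pow.2 (by norm_num : 1 < 3))

lemma abs_rfun_le (hx : x ∈ Icc (0 : ℝ) 1) (ht : 0 < t) :
    |rfun t x| ≤ |levyDensity (1 - x) t - levyDensity (1 + x) t| +
      6 * (∑' n : ℕ, 1 / ((n : ℝ) + 1) ^ 3) * x := by
  obtain ⟨hx0, hx1⟩ := hx
  have hsum := (hasSum_nat_add_iff' 1).2 (hasSum_nat_levyDensity x ht)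
  simp only [Finset.range_one, Finset.sum_singleton, Nat.cast_zero, mul_zero, zero_add] at hsum
  have hmajorant := (summable_one_div_add_one_pow_three.hasSum.mul_left 6).mul_right x
  rw [← sub_le_iff_le_add']
  refine (abs_sub_abs_le_abs_sub _ _).trans (hsum.norm_le_of_bounded hmajorant fun n ↦ ?_)
  push_cast
  calc _ ≤ 24 / (2 * ((n : ℝ) + 1)) ^ 3 * |2 * ((n : ℝ) + 1) + 1 - x - (2 * (n + 1) + 1 + x)| :=
        abs_levyDensity_sub_le (by positivity) (by linarith) (by linarith) ht
    _ = 24 / (2 * ((n : ℝ) + 1)) ^ 3 * (2 * x) := by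
        rw [← abs_of_nonneg (by positivity : 0 ≤ 2 * x), ← abs_neg]
        ring_nf
    _ = 6 * (1 / ((n : ℝ) + 1) ^ 3) * x := by
        field_simp
        ring

lemma setIntegral_Ioc_abs_levyDensity_sub_le (hx : x ∈ Icc (0 : ℝ) 1) :
    ∫ t in Ioc 0 1, |levyDensity (1 - x) t - levyDensity (1 + x) t| ≤ 384 * x := by
  obtain ⟨hx0, hx1⟩ := hx
  have hint (a : ℝ) : IntegrableOn (levyDensity a) (Ioc 0 1) :=
    (integrableOn_levyDensity a).mono_set Ioc_subset_Ioi_self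
  have hdiff := ((hint (1 - x)).sub (hint (1 + x))).abs
  rcases le_total x (1 / 2) with hx | hx
  · calc ∫ t in Ioc 0 1, |levyDensity (1 - x) t - levyDensity (1 + x) t|
        ≤ ∫ t in Ioc (0 : ℝ) 1, 384 * x := by
          refine setIntegral_mono_on hdiff (integrableOn_const (by simp)) measurableSet_Ioc
            fun t ht ↦ (abs_levyDensity_sub_le (m := 1 / 2) (by norm_num) (by linarith)
              (by linarith) ht.1).trans_eq ?_
          rw [← abs_neg, show -(1 - x - (1 + x)) = 2 * x by ring, abs_of_nonneg (by positivity)]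
          ring
      _ = 384 * x := by simp
  · calc ∫ t in Ioc 0 1, |levyDensity (1 - x) t - levyDensity (1 + x) t|
        ≤ ∫ t in Ioc 0 1, (levyDensity (1 - x) t + levyDensity (1 + x) t) := by
          refine setIntegral_mono hdiff ((hint _).add (hint _)) fun t ↦ (abs_sub _ _).trans_eq ?_
          rw [abs_of_nonneg (levyDensity_nonneg (by linarith) t),
            abs_of_nonneg (levyDensity_nonneg (by linarith) t)]
      _ = (∫ t in Ioc 0 1, levyDensity (1 - x) t) + ∫ t in Ioc 0 1, levyDensity (1 + x) t :=
          integral_add (hint _) (hint _)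
      _ ≤ 1 + 1 := add_le_add
          (setIntegral_levyDensity_le_one (by linarith) Ioc_subset_Ioi_self)
          (setIntegral_levyDensity_le_one (by linarith) Ioc_subset_Ioi_self)
      _ ≤ 384 * x := by linarith

lemma integrableOn_Ioc_rfun (hx : x ∈ Icc (0 : ℝ) 1) : IntegrableOn (rfun · x) (Ioc 0 1) :=
  ((integrableOn_levyDensity_sub _ _ Ioc_subset_Ioi_self).abs.add
    (integrableOn_const (by simp))).mono'
    (((continuousOn_rfun x).mono Ioc_subset_Ioi_self).aestronglyMeasurable measurableSet_Ioc)
    ((ae_restrict_mem measurableSet_Ioc).mono fun _ ht ↦ abs_rfun_le hx ht.1)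

lemma setIntegral_Ioc_abs_rfun_le (hx : x ∈ Icc (0 : ℝ) 1) :
    ∫ t in Ioc 0 1, |rfun t x| ≤ (384 + 6 * ∑' n : ℕ, 1 / ((n : ℝ) + 1) ^ 3) * x := by
  set Z := ∑' n : ℕ, 1 / ((n : ℝ) + 1) ^ 3
  have hnearest := (integrableOn_levyDensity_sub (1 - x) (1 + x)
    (T := Ioc 0 1) Ioc_subset_Ioi_self).abs
  have hconst : IntegrableOn (fun _ : ℝ ↦ 6 * Z * x) (Ioc 0 1) := integrableOn_const (by simp)
  calc ∫ t in Ioc 0 1, |rfun t x|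
      ≤ ∫ t in Ioc 0 1, (|levyDensity (1 - x) t - levyDensity (1 + x) t| + 6 * Z * x) :=
        setIntegral_mono_on (integrableOn_Ioc_rfun hx).abs (hnearest.add hconst)
          measurableSet_Ioc fun t ht ↦ abs_rfun_le hx ht.1
    _ = (∫ t in Ioc 0 1, |levyDensity (1 - x) t - levyDensity (1 + x) t|) + 6 * Z * x := by
        rw [integral_add hnearest hconst]
        simp
    _ ≤ (384 + 6 * Z) * x := by linarith [setIntegral_Ioc_abs_levyDensity_sub_le hx]

end NearZero

section SpectralTail

variable {a t : ℝ}

lemma summable_Efun (ht : 0 < t) : Summable fun n : ℕ ↦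
    ((n : ℝ) + 2) ^ 2 * Real.exp (-(π ^ 2) * (((n : ℝ) + 2) ^ 2 - 1) * t / 2) := by
  refine Summable.of_nonneg_of_le (fun n ↦ by positivity) (fun n ↦ ?_)
    ((summable_nat_add_iff 2).2 (Real.summable_pow_mul_exp_neg_nat_mul 2 ht))
  have hn := Nat.cast_nonneg (α := ℝ) n
  have hexponent : 2 * ((n : ℝ) + 2) ≤ π ^ 2 * (((n : ℝ) + 2) ^ 2 - 1) :=
    calc 2 * ((n : ℝ) + 2) ≤ 3 ^ 2 * (((n : ℝ) + 2) ^ 2 - 1) := by nlinarith [hn]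
      _ ≤ π ^ 2 * (((n : ℝ) + 2) ^ 2 - 1) := by
        gcongr
        · nlinarith [hn]
        · exact pi_gt_three.le
  push_cast
  gcongr
  linarith [mul_le_mul_of_nonneg_right hexponent ht.le]

lemma Efun_nonneg (t : ℝ) : 0 ≤ Efun t :=
  mul_nonneg (sq_nonneg π) (tsum_nonneg fun n ↦ by positivity)

lemma Efun_le_mul_exp (ha : 0 < a) (hat : a ≤ t) :
    Efun t ≤ Efun a * Real.exp (-(3 * π ^ 2 / 2) * (t - a)) := by
  rw [Efun, Efun, mul_assoc, ← tsum_mul_right]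
  refine mul_le_mul_of_nonneg_left ?_ (sq_nonneg π)
  refine (summable_Efun (ha.trans_le hat)).tsum_le_tsum (fun n ↦ ?_)
    ((summable_Efun ha).mul_right _)
  rw [mul_assoc (((n : ℝ) + 2) ^ 2), ← Real.exp_add]
  gcongr
  have hgap : 3 ≤ ((n : ℝ) + 2) ^ 2 - 1 := by
    nlinarith [Nat.cast_nonneg (α := ℝ) n]
  have hfactor : 0 ≤ π ^ 2 * (t - a) / 2 := by
    have := sub_nonneg.2 hat
    positivity
  nlinarith [mul_le_mul_of_nonneg_left hgap hfactor]

lemma abs_sin_nat_mul_le (n : ℕ) (y : ℝ) : |Real.sin (n * y)| ≤ n * |Real.sin y| := by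
  induction n with
  | zero => simp
  | succ n ih =>
    calc |Real.sin ((n + 1 : ℕ) * y)|
        = |Real.sin (n * y) * Real.cos y + Real.cos (n * y) * Real.sin y| := by
          rw [← Real.sin_add]
          push_cast
          ring_nf
      _ ≤ |Real.sin (n * y)| * |Real.cos y| + |Real.cos (n * y)| * |Real.sin y| := by
          rw [← abs_mul, ← abs_mul]
          exact abs_add_le _ _
      _ ≤ n * |Real.sin y| * 1 + 1 * |Real.sin y| := by
          gcongr <;> exact Real.abs_cos_le_one _
      _ = (n + 1 : ℕ) * |Real.sin y| := by
          push_cast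
          ring

/-- The integrand `e^{π²t/2}·r_t(x)` of `Ifun` minus its limit `π·sin(πx)` as `t → ∞`, that is, the
contribution of all frequencies but the lowest. -/
noncomputable def spectralRemainder (x t : ℝ) : ℝ :=
  Real.exp (π ^ 2 * t / 2) * rfun t x - π * Real.sin (π * x)

lemma continuousOn_spectralRemainder (x : ℝ) : ContinuousOn (spectralRemainder x) (Ioi 0) := by
  have hexp : Continuous fun t ↦ Real.exp (π ^ 2 * t / 2) := by fun_prop
  exact (hexp.continuousOn.mul (continuousOn_rfun x)).sub continuousOn_const

lemma hasSum_spectralRemainder (x : ℝ) (ht : 0 < t) :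
    HasSum (fun n : ℕ ↦ π * (-1 : ℝ) ^ (n + 1) * ((n : ℝ) + 2) *
      Real.exp (-(π ^ 2) * (((n : ℝ) + 2) ^ 2 - 1) * t / 2) * Real.sin ((n + 2 : ℕ) * (π * x)))
      (spectralRemainder x t) := by
  have hrest := (hasSum_nat_add_iff' 1).2 ((hasSum_rfun x ht).mul_left (Real.exp (π ^ 2 * t / 2)))
  convert! hrest using 1
  · ext n
    rw [show -(π ^ 2) * (((n : ℝ) + 2) ^ 2 - 1) * t / 2
        = π ^ 2 * t / 2 + -(π ^ 2) * (((n + 1 : ℕ) : ℝ) + 1) ^ 2 * t / 2 by push_cast; ring,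
      Real.exp_add]
    push_cast
    ring_nf
  · have hlowest : Real.exp (π ^ 2 * t / 2) * Real.exp (-(π ^ 2) * t / 2) = 1 := by
      rw [← Real.exp_add, Real.exp_eq_one_iff]
      ring
    simp only [Finset.range_one, Finset.sum_singleton, pow_zero, Nat.cast_zero, zero_add, one_pow,
      mul_one, one_mul, spectralRemainder]
    linear_combination π * Real.sin (π * x) * hlowest

lemma abs_spectralRemainder_le (x : ℝ) (ht : 0 < t) :
    |spectralRemainder x t| ≤ Efun t * |Real.sin (π * x)| / π := by
  refine (hasSum_spectralRemainder x ht).norm_le_of_bounded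
    ((((summable_Efun ht).hasSum.mul_left (π ^ 2)).mul_right _).div_const π) fun n ↦ ?_
  have hn : (0 : ℝ) ≤ (n : ℝ) + 2 := by positivity
  simp only [norm_mul, norm_pow, norm_neg, norm_one, one_pow, mul_one, Real.norm_eq_abs,
    Real.abs_exp, abs_of_pos pi_pos, abs_of_nonneg hn]
  calc _ ≤ π * ((n : ℝ) + 2) * Real.exp (-(π ^ 2) * (((n : ℝ) + 2) ^ 2 - 1) * t / 2) *
        ((n + 2 : ℕ) * |Real.sin (π * x)|) := by
        gcongr
        exact abs_sin_nat_mul_le _ _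
    _ = _ := by
        push_cast
        field_simp

lemma abs_spectralRemainder_le_mul_exp (x : ℝ) (ha : 0 < a) (hat : a ≤ t) :
    |spectralRemainder x t| ≤
      Efun a * |Real.sin (π * x)| / π * Real.exp (-(3 * π ^ 2 / 2) * (t - a)) :=
  calc |spectralRemainder x t| ≤ Efun t * |Real.sin (π * x)| / π :=
        abs_spectralRemainder_le x (ha.trans_le hat)
    _ ≤ Efun a * Real.exp (-(3 * π ^ 2 / 2) * (t - a)) * |Real.sin (π * x)| / π := by
        gcongr
        exact Efun_le_mul_exp ha hat
    _ = _ := by ring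

lemma abs_spectralRemainder_le_of_le (x : ℝ) (ha : 0 < a) (hat : a ≤ t) :
    |spectralRemainder x t| ≤ Efun a * |Real.sin (π * x)| := by
  have hM : 0 ≤ Efun a * |Real.sin (π * x)| := mul_nonneg (Efun_nonneg a) (abs_nonneg _)
  have hexp : Real.exp (-(3 * π ^ 2 / 2) * (t - a)) ≤ 1 := by
    rw [Real.exp_le_one_iff, neg_mul, neg_nonpos]
    exact mul_nonneg (by positivity) (sub_nonneg.2 hat)
  calc |spectralRemainder x t| ≤ Efun a * |Real.sin (π * x)| / π *
        Real.exp (-(3 * π ^ 2 / 2) * (t - a)) := abs_spectralRemainder_le_mul_exp x ha hat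
    _ ≤ Efun a * |Real.sin (π * x)| / π :=
        mul_le_of_le_one_right (div_nonneg hM pi_pos.le) hexp
    _ ≤ Efun a * |Real.sin (π * x)| := div_le_self hM (by linarith [pi_gt_three])

end SpectralTail

section Integrals

variable {a x : ℝ} {S : Set ℝ}

lemma exp_neg_mul_sub (b a t : ℝ) :
    Real.exp (-b * (t - a)) = Real.exp (b * a) * Real.exp (-b * t) := by
  rw [← Real.exp_add]
  ring_nf

lemma integrableOn_Ioi_exp_neg_mul_sub {b : ℝ} (hb : 0 < b) (a : ℝ) :
    IntegrableOn (fun t ↦ Real.exp (-b * (t - a))) (Ioi a) := by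
  simp only [exp_neg_mul_sub]
  exact (exp_neg_integrableOn_Ioi a hb).const_mul _

lemma integral_Ioi_exp_neg_mul_sub {b : ℝ} (hb : 0 < b) (a : ℝ) :
    ∫ t in Ioi a, Real.exp (-b * (t - a)) = 1 / b := by
  simp only [exp_neg_mul_sub]
  rw [integral_const_mul, integral_exp_mul_Ioi (neg_lt_zero.2 hb), neg_div_neg_eq, ← mul_div_assoc,
    ← Real.exp_add, neg_mul, add_neg_cancel, Real.exp_zero]

lemma integrableOn_Ioi_spectralRemainder (x : ℝ) (ha : 0 < a) :
    IntegrableOn (spectralRemainder x) (Ioi a) :=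
  ((integrableOn_Ioi_exp_neg_mul_sub (by positivity) a).const_mul _).mono'
    (((continuousOn_spectralRemainder x).mono (Ioi_subset_Ioi ha.le)).aestronglyMeasurable
      measurableSet_Ioi)
    ((ae_restrict_mem measurableSet_Ioi).mono fun _ ht ↦
      abs_spectralRemainder_le_mul_exp x ha (le_of_lt ht))

lemma setIntegral_Ioi_abs_spectralRemainder_le (x : ℝ) (ha : 0 < a) :
    ∫ t in Ioi a, |spectralRemainder x t| ≤ Efun a * |Real.sin (π * x)| := by
  have hrate : 0 < 3 * π ^ 2 / 2 := by positivity
  calc ∫ t in Ioi a, |spectralRemainder x t|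
      ≤ ∫ t in Ioi a, Efun a * |Real.sin (π * x)| / π *
          Real.exp (-(3 * π ^ 2 / 2) * (t - a)) :=
        setIntegral_mono_on (integrableOn_Ioi_spectralRemainder x ha).abs
          ((integrableOn_Ioi_exp_neg_mul_sub hrate a).const_mul _) measurableSet_Ioi
          fun t ht ↦ abs_spectralRemainder_le_mul_exp x ha (le_of_lt ht)
    _ = Efun a * |Real.sin (π * x)| / (π * (3 * π ^ 2 / 2)) := by
        rw [integral_const_mul, integral_Ioi_exp_neg_mul_sub hrate]
        field_simp
    _ ≤ Efun a * |Real.sin (π * x)| :=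
        div_le_self (mul_nonneg (Efun_nonneg a) (abs_nonneg _)) (by nlinarith [pi_gt_three])

lemma abs_sin_pi_mul_le (hx : 0 ≤ x) : |Real.sin (π * x)| ≤ π * x :=
  Real.abs_sin_le_abs.trans_eq (abs_of_nonneg (by positivity))

lemma abs_spectralRemainder_le_abs_rfun {t : ℝ} (hx : 0 ≤ x) (ht : t ≤ 1) :
    |spectralRemainder x t| ≤ Real.exp (π ^ 2 / 2) * |rfun t x| + π ^ 2 * x := by
  have hsin : |π * Real.sin (π * x)| ≤ π ^ 2 * x := by
    rw [abs_mul, abs_of_pos pi_pos, sq, mul_assoc]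
    gcongr
    exact abs_sin_pi_mul_le hx
  have hexp : |Real.exp (π ^ 2 * t / 2) * rfun t x| ≤ Real.exp (π ^ 2 / 2) * |rfun t x| := by
    rw [abs_mul, Real.abs_exp]
    gcongr
    exact mul_le_of_le_one_right (sq_nonneg π) ht
  exact (abs_sub _ _).trans (add_le_add hexp hsin)

lemma integrableOn_Ioc_spectralRemainder (hx : x ∈ Icc (0 : ℝ) 1) :
    IntegrableOn (spectralRemainder x) (Ioc 0 1) :=
  (((integrableOn_Ioc_rfun hx).abs.const_mul _).add (integrableOn_const (by simp))).mono'
    (((continuousOn_spectralRemainder x).mono Ioc_subset_Ioi_self).aestronglyMeasurable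
      measurableSet_Ioc)
    ((ae_restrict_mem measurableSet_Ioc).mono fun _ ht ↦
      abs_spectralRemainder_le_abs_rfun hx.1 ht.2)

lemma setIntegral_Ioc_abs_spectralRemainder_le (hx : x ∈ Icc (0 : ℝ) 1) :
    ∫ t in Ioc 0 1, |spectralRemainder x t| ≤
      Real.exp (π ^ 2 / 2) * (∫ t in Ioc 0 1, |rfun t x|) + π ^ 2 * x := by
  have hrfun := (integrableOn_Ioc_rfun hx).abs.const_mul (Real.exp (π ^ 2 / 2))
  have hconst : IntegrableOn (fun _ : ℝ ↦ π ^ 2 * x) (Ioc 0 1) := integrableOn_const (by simp)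
  calc ∫ t in Ioc 0 1, |spectralRemainder x t|
      ≤ ∫ t in Ioc 0 1, (Real.exp (π ^ 2 / 2) * |rfun t x| + π ^ 2 * x) :=
        setIntegral_mono_on (integrableOn_Ioc_spectralRemainder hx).abs (hrfun.fun_add hconst)
          measurableSet_Ioc fun t ht ↦ abs_spectralRemainder_le_abs_rfun hx.1 ht.2
    _ = Real.exp (π ^ 2 / 2) * (∫ t in Ioc 0 1, |rfun t x|) + π ^ 2 * x := by
        rw [integral_add hrfun hconst, integral_const_mul]
        simp

lemma integrableOn_Ioi_zero_spectralRemainder (hx : x ∈ Icc (0 : ℝ) 1) :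
    IntegrableOn (spectralRemainder x) (Ioi 0) := by
  rw [← Ioc_union_Ioi_eq_Ioi zero_le_one]
  exact (integrableOn_Ioc_spectralRemainder hx).union
    (integrableOn_Ioi_spectralRemainder x one_pos)

lemma exists_setIntegral_Ioi_zero_abs_spectralRemainder_le :
    ∃ K, 0 ≤ K ∧ ∀ x ∈ Icc (0 : ℝ) 1, ∫ t in Ioi 0, |spectralRemainder x t| ≤ K * x := by
  have := Efun_nonneg 1
  set Z := ∑' n : ℕ, 1 / ((n : ℝ) + 1) ^ 3
  have : 0 ≤ Z := tsum_nonneg fun n ↦ by positivity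
  refine ⟨Real.exp (π ^ 2 / 2) * (384 + 6 * Z) + π ^ 2 + Efun 1 * π, by positivity,
    fun x hx ↦ ?_⟩
  calc ∫ t in Ioi 0, |spectralRemainder x t|
      = (∫ t in Ioc 0 1, |spectralRemainder x t|) + ∫ t in Ioi 1, |spectralRemainder x t| := by
        rw [← Ioc_union_Ioi_eq_Ioi zero_le_one,
          setIntegral_union (Ioc_disjoint_Ioi le_rfl) measurableSet_Ioi
            (integrableOn_Ioc_spectralRemainder hx).abs
            (integrableOn_Ioi_spectralRemainder x one_pos).abs]
    _ ≤ Real.exp (π ^ 2 / 2) * (∫ t in Ioc 0 1, |rfun t x|) + π ^ 2 * x +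
          Efun 1 * |Real.sin (π * x)| :=
        add_le_add (setIntegral_Ioc_abs_spectralRemainder_le hx)
          (setIntegral_Ioi_abs_spectralRemainder_le x one_pos)
    _ ≤ Real.exp (π ^ 2 / 2) * ((384 + 6 * Z) * x) + π ^ 2 * x + Efun 1 * (π * x) := by
        gcongr
        · exact setIntegral_Ioc_abs_rfun_le hx
        · exact abs_sin_pi_mul_le hx.1
    _ = (Real.exp (π ^ 2 / 2) * (384 + 6 * Z) + π ^ 2 + Efun 1 * π) * x := by ring

lemma abs_Ifun_sub_le (hint : IntegrableOn (spectralRemainder x) S) (hS : volume S < ⊤) :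
    |Ifun x S - π * (volume S).toReal * Real.sin (π * x)| ≤ ∫ t in S, |spectralRemainder x t| := by
  have hconst : IntegrableOn (fun _ : ℝ ↦ π * Real.sin (π * x)) S := integrableOn_const hS.ne
  have hsplit : Ifun x S = (∫ t in S, spectralRemainder x t) +
      ∫ _ in S, π * Real.sin (π * x) := by
    rw [← integral_add hint hconst]
    simp only [Ifun, spectralRemainder, sub_add_cancel]
  have hrem : Ifun x S - π * (volume S).toReal * Real.sin (π * x) =
      ∫ t in S, spectralRemainder x t := by
    rw [hsplit, setIntegral_const, smul_eq_mul, Measure.real]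
    ring
  rw [hrem]
  exact abs_integral_le_integral_abs

lemma setIntegral_abs_spectralRemainder_le (x : ℝ) (ha : 0 < a) (hSa : S ⊆ Ici a)
    (hS : volume S < ⊤) :
    ∫ t in S, |spectralRemainder x t| ≤
      Efun a * min 1 (volume S).toReal * |Real.sin (π * x)| := by
  have hM : 0 ≤ Efun a * |Real.sin (π * x)| := mul_nonneg (Efun_nonneg a) (abs_nonneg _)
  rw [mul_right_comm, mul_min_of_nonneg _ _ hM, le_min_iff, mul_one]
  constructor
  · calc ∫ t in S, |spectralRemainder x t| ≤ ∫ t in Ioi a, |spectralRemainder x t| :=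
          setIntegral_mono_set (integrableOn_Ioi_spectralRemainder x ha).abs
            (ae_of_all _ fun _ ↦ abs_nonneg _)
            (hSa.eventuallyLE.trans Ioi_ae_eq_Ici.symm.le)
      _ ≤ Efun a * |Real.sin (π * x)| := setIntegral_Ioi_abs_spectralRemainder_le x ha
  · have hbound (t) (ht : t ∈ S) : ‖|spectralRemainder x t|‖ ≤ Efun a * |Real.sin (π * x)| := by
      rw [Real.norm_eq_abs, abs_abs]
      exact abs_spectralRemainder_le_of_le x ha (hSa ht)
    exact (Real.le_norm_self _).trans (norm_setIntegral_le_of_norm_le_const hS hbound)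

end Integrals

/-- `|I(x,S) − π·λ(S)·sin(πx)| ≤ C·min(x, E_{inf S}·min(1,λ(S))·sin(πx))`, the
second term of the minimum being discarded (i.e. `+∞`) when `inf S = 0`. -/
theorem stmt8 :
    ∃ C : ℝ, 0 < C ∧ ∀ x ∈ Set.Icc (0:ℝ) 1, ∀ S : Set ℝ,
      MeasurableSet S → S ⊆ Set.Ioi 0 → volume S < ⊤ →
      |Ifun x S - π * (volume S).toReal * Real.sin (π * x)| ≤ C * x ∧
      (0 < sInf S →
        |Ifun x S - π * (volume S).toReal * Real.sin (π * x)| ≤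
          C * (Efun (sInf S) * min 1 (volume S).toReal * Real.sin (π * x))) := by
  obtain ⟨K, hK, hKx⟩ := exists_setIntegral_Ioi_zero_abs_spectralRemainder_le
  refine ⟨K + 1, by positivity, fun x hx S _ hS hSfin ↦ ?_⟩
  have hint := integrableOn_Ioi_zero_spectralRemainder hx
  have hle := abs_Ifun_sub_le (hint.mono_set hS) hSfin
  refine ⟨hle.trans ?_, fun ha ↦ hle.trans ?_⟩
  · calc ∫ t in S, |spectralRemainder x t| ≤ ∫ t in Ioi 0, |spectralRemainder x t| :=
          setIntegral_mono_set hint.abs (ae_of_all _ fun _ ↦ abs_nonneg _) hS.eventuallyLE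
      _ ≤ K * x := hKx x hx
      _ ≤ (K + 1) * x := mul_le_mul_of_nonneg_right (by linarith) hx.1
  · have hSa : S ⊆ Ici (sInf S) := fun t ht ↦ csInf_le ⟨0, fun s hs ↦ (hS hs).le⟩ ht
    have hsin : 0 ≤ Real.sin (π * x) :=
      Real.sin_nonneg_of_nonneg_of_le_pi (mul_nonneg pi_pos.le hx.1)
        (mul_le_of_le_one_right pi_pos.le hx.2)
    have hbound := setIntegral_abs_spectralRemainder_le x ha hSa hSfin
    rw [abs_of_nonneg hsin] at hbound
    have hnonneg := (integral_nonneg fun t ↦ abs_nonneg (spectralRemainder x t)).trans hbound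
    exact hbound.trans (le_mul_of_one_le_left hnonneg (by linarith))
end
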